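/- The function d₂(x) = π₂(x) − C₂·Li₂(x) has at least 238 sign changes on the interval (2, 2^26): there exist real numbers x₀ < x₁ < ⋯ < x_{238} in (2, 2^26) such that d₂(x_i)·d₂(x_{i+1}) < 0 for all 0 ≤ i < 238. -/

import Mathlib

open Real Filter Set

/-- `Li₂(x) = ∫₂ˣ dt/(log t)²`. -/
noncomputable def Li2 (x : ℝ) : ℝ := ∫ t in (2:ℝ)..x, 1 / (Real.log t) ^ 2

/-- `π₂(x)`: the number of primes `p` with `p+2` also prime and `p+2 ≤ x`. -/
noncomputable def piTwin (x : ℝ) : ℕ :=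
  Nat.card {p : ℕ | p.Prime ∧ (p + 2).Prime ∧ ((p : ℝ) + 2) ≤ x}

/-- The twin prime constant `C₂ = 2·∏_{p prime, p>2} (1 − 1/(p−1)²)`. -/
noncomputable def C2 : ℝ :=
  2 * ∏' p : {p : ℕ // p.Prime ∧ 2 < p}, (1 - 1 / (((p : ℕ) : ℝ) - 1) ^ 2)

/-- `d₂(x) = π₂(x) − C₂·Li₂(x)`. -/
noncomputable def d2 (x : ℝ) : ℝ := (piTwin x : ℝ) - C2 * Li2 x


/-- Evaluate `x` to a literal before handing it to `f`. -/
def force {α : Type} (x : ℕ) (f : ℕ → α) : α :=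
  Nat.rec (motive := fun _ => α) (f 0) (fun n _ => f n.succ) x

/-- The repunit `∑_{j<n} 2^(q j)`. -/
def repu (q n : ℕ) : ℕ := (2 ^ (q * n) - 1) / (2 ^ q - 1)

/-- Positions `i` with `a + i ≡ ± m (mod q)`, for `i < q`. -/
def pat (a q m : ℕ) : ℕ :=
  2 ^ ((m + (q - a % q)) % q) ||| 2 ^ ((q - m + (q - a % q)) % q)

def mark (a S q m : ℕ) : ℕ :=
  bif (Nat.ble q 79 || Nat.beq (Nat.gcd q (Nat.factorial 79)) 1) then
    pat a q m * repu q (S / q + 1) else 0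

def sieve (a S M : ℕ) (j : ℕ) : ℕ → ℕ :=
  Nat.rec (motive := fun _ => ℕ → ℕ)
    (fun lo => bif Nat.ble lo M then
      mark a S (6 * lo - 1) lo ||| mark a S (6 * lo + 1) lo else 0)
    (fun j ih lo => ih lo ||| ih (lo + 2 ^ j)) j

def pcStep (w n x : ℕ) : ℕ :=
  (x &&& ((2 ^ w - 1) * repu (2 * w) n)) + ((x >>> w) &&& ((2 ^ w - 1) * repu (2 * w) n))

/-- After `j` steps: the fields of width `2 ^ j` hold the bit counts. -/
def pcs (s x : ℕ) (j : ℕ) : ℕ :=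
  Nat.rec (motive := fun _ => ℕ) x
    (fun j ih => force ih (fun y => pcStep (2 ^ j) (2 ^ (s - 1 - j)) y)) j

def chkPts (s : ℕ) (x : ℕ) (l : List (ℕ × ℕ)) : Bool :=
  l.all (fun p => Nat.beq (pcs s (x % 2 ^ p.1) s % 2 ^ (2 ^ s) + p.2) p.1)

def chkSeg (s J a M : ℕ) (l : List (ℕ × ℕ)) : Bool :=
  force (sieve a (2 ^ s) M J 1) (fun x => chkPts s x l)

theorem force_eq {α : Type} (x : ℕ) (f : ℕ → α) : force x f = f x := by
  cases x <;> rfl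

theorem repu_zero (q : ℕ) : repu q 0 = 0 := by simp [repu]

theorem repu_succ (q n : ℕ) (hq : 0 < q) : repu q (n + 1) = 2 ^ q * repu q n + 1 := by
  have h2 : 2 ≤ 2 ^ q := by
    calc 2 = 2 ^ 1 := rfl
      _ ≤ 2 ^ q := Nat.pow_le_pow_right (by norm_num) hq
  have h : ∀ n, repu q n = ∑ k ∈ Finset.range n, (2 ^ q) ^ k := by
    intro n
    rw [Nat.geomSum_eq h2, repu, pow_mul]
  rw [h, h, Finset.sum_range_succ', Finset.mul_sum]
  simp [pow_succ, mul_comm]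

theorem testBit_mul_repu (p q n : ℕ) (hq : 0 < q) (hp : p < 2 ^ q) :
    ∀ i, (p * repu q n).testBit i = (decide (i < q * n) && p.testBit (i % q)) := by
  induction n with
  | zero => intro i; simp [repu_zero]
  | succ n ih =>
    intro i
    have e : p * repu q (n + 1) = 2 ^ q * (p * repu q n) + p := by
      rw [repu_succ q n hq]; ring
    rw [e, Nat.testBit_two_pow_mul_add _ hp]
    split_ifs with h
    · have : i < q * (n + 1) := lt_of_lt_of_le h (by nlinarith)
      simp [Nat.mod_eq_of_lt h, this]
    · push Not at h
      rw [ih, Nat.mod_eq_sub_mod h]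
      congr 1
      have : i - q < q * n ↔ i < q * (n + 1) := by
        rw [mul_add, mul_one]; omega
      simp [this]

theorem pat_lt (a q m : ℕ) (hq : 0 < q) : pat a q m < 2 ^ q := by
  unfold pat
  apply Nat.or_lt_two_pow <;>
  exact Nat.pow_lt_pow_right (by norm_num) (Nat.mod_lt _ hq)

theorem testBit_pat (a q m i : ℕ) : (pat a q m).testBit i = true ↔
    ((m + (q - a % q)) % q = i ∨ (q - m + (q - a % q)) % q = i) := by
  unfold pat
  rw [Nat.testBit_or]
  simp [Nat.testBit_two_pow]

theorem res_aux (a q m i : ℕ) (hq : 0 < q) :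
    ((m + (q - a % q)) % q = i % q ↔ (q : ℤ) ∣ ((a : ℤ) + i - m)) := by
  have h1 : a % q < q := Nat.mod_lt _ hq
  change Nat.ModEq q _ _ ↔ _
  rw [Nat.modEq_iff_dvd]
  push_cast [Nat.cast_sub h1.le]
  rw [show (a : ℤ) + i - m = (i - (m + (q - (a : ℤ) % q))) + q * (1 + a / q) by
    have := Int.emod_add_mul_ediv (a : ℤ) q
    linarith]
  exact (Int.dvd_add_left (Dvd.intro _ rfl)).symm

def guardq (q : ℕ) : Prop := q ≤ 79 ∨ Nat.gcd q (Nat.factorial 79) = 1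

theorem testBit_mark (a S q m i : ℕ) (hi : i < S) (hq : 0 < q) (hm : m ≤ q) :
    (mark a S q m).testBit i = true ↔ guardq q ∧
      ((q : ℤ) ∣ ((a : ℤ) + i - m) ∨ (q : ℤ) ∣ ((a : ℤ) + i + m)) := by
  unfold mark
  have hb : (Nat.ble q 79 || Nat.beq (Nat.gcd q (Nat.factorial 79)) 1) = true ↔ guardq q := by
    unfold guardq
    rw [Bool.or_eq_true, Nat.ble_eq, Nat.beq_eq]
  by_cases hg : guardq q
  · rw [hb.2 hg, cond_true, testBit_mul_repu _ _ _ hq (pat_lt a q m hq), Bool.and_eq_true,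
      testBit_pat, res_aux a q m i hq, res_aux a q (q - m) i hq]
    have h1 : i < q * (S / q + 1) := lt_trans hi (Nat.lt_mul_div_succ S hq)
    have h2 : ((a : ℤ) + i - ((q - m : ℕ) : ℤ)) = ((a : ℤ) + i + m) + q * (-1) := by
      push_cast [Nat.cast_sub hm]; ring
    rw [h2, Int.dvd_add_left (Dvd.intro _ rfl)]
    simp [h1, hg]
  · have : (Nat.ble q 79 || Nat.beq (Nat.gcd q (Nat.factorial 79)) 1) = false := by
      rw [← Bool.not_eq_true]; exact fun h => hg (hb.1 h)
    rw [this]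
    simp [hg]

def hit (q m k : ℕ) : Prop := guardq q ∧
      ((q : ℤ) ∣ ((k : ℤ) - m) ∨ (q : ℤ) ∣ ((k : ℤ) + m))

theorem testBit_sieve (a S M j i : ℕ) (hi : i < S) : ∀ lo, 0 < lo →
    ((sieve a S M j lo).testBit i = true ↔ ∃ m, lo ≤ m ∧ m < lo + 2 ^ j ∧ m ≤ M ∧
      (hit (6 * m - 1) m (a + i) ∨ hit (6 * m + 1) m (a + i))) := by
  induction j with
  | zero =>
    intro lo hlo
    change (bif Nat.ble lo M then
      mark a S (6 * lo - 1) lo ||| mark a S (6 * lo + 1) lo else 0).testBit i = true ↔ _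
    by_cases h : lo ≤ M
    · rw [(show Nat.ble lo M = true by rw [Nat.ble_eq]; exact h), cond_true, Nat.testBit_or, Bool.or_eq_true,
        testBit_mark a S _ lo i hi (by omega) (by omega),
        testBit_mark a S _ lo i hi (by omega) (by omega)]
      constructor
      · intro H
        refine ⟨lo, le_rfl, by simp, h, ?_⟩
        simpa [hit] using H
      · rintro ⟨m, h1, h2, h3, h4⟩
        obtain rfl : m = lo := by simp at h2; omega
        simpa [hit] using h4
    · have : Nat.ble lo M = false := by
        rw [← Bool.not_eq_true, Nat.ble_eq]; exact h
      rw [this]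
      simp only [cond_false, Nat.zero_testBit]
      constructor
      · intro h; cases h
      · rintro ⟨m, h1, h2, h3, h4⟩; omega
  | succ j ih =>
    intro lo hlo
    change (sieve a S M j lo ||| sieve a S M j (lo + 2 ^ j)).testBit i = true ↔ _
    rw [Nat.testBit_or, Bool.or_eq_true, ih lo hlo, ih (lo + 2 ^ j) (Nat.add_pos_left hlo _)]
    constructor
    · rintro (⟨m, h1, h2, h3⟩ | ⟨m, h1, h2, h3⟩)
      · exact ⟨m, h1, by rw [pow_succ]; omega, h3⟩
      · exact ⟨m, by omega, by rw [pow_succ]; omega, h3⟩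
    · rintro ⟨m, h1, h2, h3⟩
      rw [pow_succ] at h2
      by_cases h : m < lo + 2 ^ j
      · exact Or.inl ⟨m, h1, h, h3⟩
      · exact Or.inr ⟨m, by omega, by omega, h3⟩

/-- `6 k - 1` and `6 k + 1` are twin primes. -/
def tw (k : ℕ) : Prop := (6 * k - 1).Prime ∧ (6 * k + 1).Prime

theorem hit_iff (q m k : ℕ) (hk : 0 < k) (hm : 0 < m) (hq : q = 6 * m - 1 ∨ q = 6 * m + 1) :
    hit q m k ↔ guardq q ∧ (q ∣ 6 * k - 1 ∨ q ∣ 6 * k + 1) := by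
  unfold hit
  apply and_congr_right
  intro _
  have hc : IsCoprime (q : ℤ) 6 := by
    rcases hq with h | h
    · refine ⟨-1, m, ?_⟩
      rw [h]; push_cast [Nat.cast_sub (show 1 ≤ 6 * m by omega)]; ring
    · refine ⟨1, -m, ?_⟩
      rw [h]; push_cast; ring
  have e1 : ((q : ℤ) ∣ (k : ℤ) - m) ↔ (q : ℤ) ∣ 6 * k - 6 * m := by
    rw [← mul_sub]; exact ⟨fun h => h.mul_left _, fun h => hc.dvd_of_dvd_mul_left h⟩
  have e2 : ((q : ℤ) ∣ (k : ℤ) + m) ↔ (q : ℤ) ∣ 6 * k + 6 * m := by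
    rw [← mul_add]; exact ⟨fun h => h.mul_left _, fun h => hc.dvd_of_dvd_mul_left h⟩
  rw [e1, e2, ← Int.natCast_dvd_natCast, ← Int.natCast_dvd_natCast,
    Nat.cast_sub (show 1 ≤ 6 * k by omega)]
  push_cast
  rcases hq with h | h
  · have hq' : (q : ℤ) = 6 * m - 1 := by omega
    have a1 : (6 * (k : ℤ) - 6 * m) = (6 * k - 1) + q * (-1) := by rw [hq']; ring
    have a2 : (6 * (k : ℤ) + 6 * m) = (6 * k + 1) + q * 1 := by rw [hq']; ring
    rw [a1, a2, Int.dvd_add_left (Dvd.intro _ rfl), Int.dvd_add_left (Dvd.intro _ rfl)]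
  · have hq' : (q : ℤ) = 6 * m + 1 := by omega
    have a1 : (6 * (k : ℤ) - 6 * m) = (6 * k + 1) + q * (-1) := by rw [hq']; ring
    have a2 : (6 * (k : ℤ) + 6 * m) = (6 * k - 1) + q * 1 := by rw [hq']; ring
    rw [a1, a2, Int.dvd_add_left (Dvd.intro _ rfl), Int.dvd_add_left (Dvd.intro _ rfl), or_comm]

theorem exists_hit_of_not_prime (N M k : ℕ) (hk : 0 < k) (hN : N = 6 * k - 1 ∨ N = 6 * k + 1)
    (hM : N < (6 * M + 5) ^ 2) (hp : ¬ N.Prime) :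
    ∃ m, 1 ≤ m ∧ m ≤ M ∧ (hit (6 * m - 1) m k ∨ hit (6 * m + 1) m k) := by
  have hN1 : N ≠ 1 := by omega
  have hpp := Nat.minFac_prime hN1
  have hdvd := Nat.minFac_dvd N
  have hsq := Nat.minFac_sq_le_self (by omega : 0 < N) hp
  set p := N.minFac
  have hpM : p < 6 * M + 5 := lt_of_pow_lt_pow_left₀ 2 (by omega) (lt_of_le_of_lt hsq hM)
  have h2 : ¬ 2 ∣ p := fun h => by have := h.trans hdvd; omega
  have h3 : ¬ 3 ∣ p := fun h => by have := h.trans hdvd; omega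
  have hp2 := hpp.two_le
  have hg : guardq p := by
    by_cases h : p ≤ 79
    · exact Or.inl h
    · right
      exact (Nat.Prime.coprime_iff_not_dvd hpp).2 (fun h' => h ((hpp.dvd_factorial).1 h'))
  have hd : p ∣ 6 * k - 1 ∨ p ∣ 6 * k + 1 := by
    rcases hN with h | h
    · left; rwa [← h]
    · right; rwa [← h]
  have h6 : p % 6 = 1 ∨ p % 6 = 5 := by omega
  refine ⟨(p + 1) / 6, by omega, by omega, ?_⟩
  have hcase : p = 6 * ((p + 1) / 6) - 1 ∨ p = 6 * ((p + 1) / 6) + 1 := by omega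
  have hm : 0 < (p + 1) / 6 := by omega
  rcases hcase with h | h
  · left
    rw [← h]
    exact (hit_iff _ _ _ hk hm (Or.inl h)).2 ⟨hg, hd⟩
  · right
    rw [← h]
    exact (hit_iff _ _ _ hk hm (Or.inr h)).2 ⟨hg, hd⟩

theorem tw_iff (M k : ℕ) (hk : M < k) (hM : 6 * k + 1 < (6 * M + 5) ^ 2) :
    ¬ tw k ↔ ∃ m, 1 ≤ m ∧ m ≤ M ∧ (hit (6 * m - 1) m k ∨ hit (6 * m + 1) m k) := by
  constructor
  · intro h
    unfold tw at h
    rw [not_and_or] at h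
    rcases h with h | h
    · exact exists_hit_of_not_prime _ M k (by omega) (Or.inl rfl) (by omega) h
    · exact exists_hit_of_not_prime _ M k (by omega) (Or.inr rfl) (by omega) h
  · rintro ⟨m, h1, h2, h⟩ ⟨t1, t2⟩
    have key : ∀ q, (q = 6 * m - 1 ∨ q = 6 * m + 1) → hit q m k → False := by
      intro q hq hh
      rw [hit_iff q m k (by omega) (by omega) hq] at hh
      rcases hh.2 with hd | hd
      · rcases (Nat.dvd_prime t1).1 hd with h | h <;> omega
      · rcases (Nat.dvd_prime t2).1 hd with h | h <;> omega
    rcases h with h | h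
    · exact key _ (Or.inl rfl) h
    · exact key _ (Or.inr rfl) h

/-- Sum of the `n` lowest fields of width `w`. -/
def fieldSum (w : ℕ) : ℕ → ℕ → ℕ
  | 0, _ => 0
  | n + 1, x => x % 2 ^ w + fieldSum w n (x / 2 ^ w)

theorem land_split (w r q r' q' : ℕ) (hr : r < 2 ^ w) (hr' : r' < 2 ^ w) :
    (2 ^ w * q + r) &&& (2 ^ w * q' + r') = 2 ^ w * (q &&& q') + (r &&& r') := by
  apply Nat.eq_of_testBit_eq
  intro i
  have h : r &&& r' < 2 ^ w := lt_of_le_of_lt Nat.and_le_left hr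
  rw [Nat.testBit_and, Nat.testBit_two_pow_mul_add _ hr, Nat.testBit_two_pow_mul_add _ hr',
    Nat.testBit_two_pow_mul_add _ h]
  split_ifs <;> simp

theorem mask_and (w n x : ℕ) (hw : 0 < w) :
    x &&& ((2 ^ w - 1) * repu (2 * w) (n + 1)) =
      2 ^ (2 * w) * ((x / 2 ^ (2 * w)) &&& ((2 ^ w - 1) * repu (2 * w) n)) + x % 2 ^ w := by
  have hlt : 2 ^ w - 1 < 2 ^ (2 * w) := by
    have h1 : 2 ^ w ≤ 2 ^ (2 * w) := Nat.pow_le_pow_right (by norm_num) (by omega)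
    have h2 : 0 < 2 ^ w := by positivity
    omega
  have e : (2 ^ w - 1) * repu (2 * w) (n + 1) =
      2 ^ (2 * w) * ((2 ^ w - 1) * repu (2 * w) n) + (2 ^ w - 1) := by
    rw [repu_succ _ _ (by omega)]; ring
  rw [e]
  conv_lhs => rw [← Nat.div_add_mod x (2 ^ (2 * w))]
  rw [land_split _ _ _ _ _ (Nat.mod_lt _ (by positivity)) hlt, Nat.and_two_pow_sub_one_eq_mod,
    Nat.mod_mod_of_dvd _ (pow_dvd_pow 2 (by omega))]

theorem pcStep_succ (w n x : ℕ) (hw : 0 < w) : pcStep w (n + 1) x =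
    2 ^ (2 * w) * pcStep w n (x / 2 ^ (2 * w)) + (x % 2 ^ w + x / 2 ^ w % 2 ^ w) := by
  unfold pcStep
  rw [mask_and w n x hw, mask_and w n (x >>> w) hw, Nat.shiftRight_eq_div_pow,
    Nat.shiftRight_eq_div_pow, Nat.div_div_eq_div_mul, Nat.div_div_eq_div_mul,
    mul_comm (2 ^ w) (2 ^ (2 * w))]
  ring

theorem fieldSum_pcStep (w n : ℕ) (hw : 0 < w) : ∀ x,
    fieldSum (2 * w) n (pcStep w n x) = fieldSum w (2 * n) x := by
  induction n with
  | zero => intro x; rfl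
  | succ n ih =>
    intro x
    have hlt : x % 2 ^ w + x / 2 ^ w % 2 ^ w < 2 ^ (2 * w) := by
      have h1 : x % 2 ^ w < 2 ^ w := Nat.mod_lt _ (by positivity)
      have h2 : x / 2 ^ w % 2 ^ w < 2 ^ w := Nat.mod_lt _ (by positivity)
      have h3 : 2 ≤ 2 ^ w := by
        calc 2 = 2 ^ 1 := rfl
          _ ≤ 2 ^ w := Nat.pow_le_pow_right (by norm_num) hw
      have h4 : 2 ^ (2 * w) = 2 ^ w * 2 ^ w := by rw [two_mul, pow_add]
      rw [h4]
      nlinarith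
    rw [pcStep_succ w n x hw, show 2 * (n + 1) = (2 * n + 1) + 1 by ring]
    simp only [fieldSum]
    rw [Nat.mul_add_mod, Nat.mod_eq_of_lt hlt, Nat.mul_add_div (by positivity),
      Nat.div_eq_of_lt hlt, add_zero, ih, Nat.div_div_eq_div_mul, ← pow_add, ← two_mul]
    ring

theorem fieldSum_pcs (s x j : ℕ) (hj : j ≤ s) :
    fieldSum (2 ^ j) (2 ^ (s - j)) (pcs s x j) = fieldSum 1 (2 ^ s) x := by
  induction j with
  | zero => rfl
  | succ j ih =>
    have e : pcs s x (j + 1) = pcStep (2 ^ j) (2 ^ (s - 1 - j)) (pcs s x j) := by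
      change force (pcs s x j) _ = _
      rw [force_eq]
    rw [e, show s - (j + 1) = s - 1 - j by omega, pow_succ, mul_comm (2 ^ j) 2,
      fieldSum_pcStep _ _ (by positivity), ← pow_succ', show s - 1 - j + 1 = s - j by omega]
    exact ih (by omega)

theorem fieldSum_one_eq_count (n : ℕ) : ∀ x, fieldSum 1 n x = Nat.count (fun i => x.testBit i = true) n := by
  induction n with
  | zero => intro x; simp [fieldSum]
  | succ n ih =>
    intro x
    rw [Nat.count_succ', fieldSum, ih, pow_one, add_comm]
    congr 1
    · congr 1
      funext i
      rw [Nat.testBit_succ]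
    · rw [Nat.testBit_zero]
      rcases Nat.mod_two_eq_zero_or_one x with h | h <;> simp [h]

theorem pcs_eq_count (s x : ℕ) :
    pcs s x s % 2 ^ (2 ^ s) = Nat.count (fun i => x.testBit i = true) (2 ^ s) := by
  rw [← fieldSum_one_eq_count, ← fieldSum_pcs s x s le_rfl]
  simp [fieldSum]

theorem count_mod (x n N : ℕ) (h : n ≤ N) :
    Nat.count (fun i => (x % 2 ^ n).testBit i = true) N = Nat.count (fun i => x.testBit i = true) n := by
  obtain ⟨d, rfl⟩ := Nat.exists_eq_add_of_le h
  rw [Nat.count_add]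
  have h1 : Nat.count (fun i => (x % 2 ^ n).testBit (n + i) = true) d = 0 := by
    rw [Nat.count_eq_card_filter_range, Finset.card_eq_zero, Finset.filter_eq_empty_iff]
    intro i _
    simp [Nat.testBit_mod_two_pow]
  have h2 : Nat.count (fun i => (x % 2 ^ n).testBit i = true) n =
      Nat.count (fun i => x.testBit i = true) n := by
    rw [Nat.count_eq_card_filter_range, Nat.count_eq_card_filter_range]
    congr 1
    apply Finset.filter_congr
    intro i hi
    rw [Finset.mem_range] at hi
    simp [Nat.testBit_mod_two_pow, hi]
  rw [h1, h2, add_zero]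

open Classical in
/-- number of twin indices below `k`. -/
noncomputable def Tw (k : ℕ) : ℕ := Nat.count tw k

open Classical in
theorem chkSeg_sound (s J a M : ℕ) (l : List (ℕ × ℕ)) (h : chkSeg s J a M l = true)
    (hJ : M < 1 + 2 ^ J) (ha : M < a) (hS : 6 * (a + 2 ^ s) < (6 * M + 5) ^ 2) :
    ∀ p ∈ l, p.1 ≤ 2 ^ s → Tw (a + p.1) = Tw a + p.2 := by
  intro p hp hps
  unfold chkSeg at h
  rw [force_eq] at h
  unfold chkPts at h
  rw [List.all_eq_true] at h
  have h1 := h p hp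
  rw [Nat.beq_eq, pcs_eq_count, count_mod _ _ _ hps] at h1
  have h2 : ∀ n ≤ 2 ^ s, Nat.count (fun i => (sieve a (2 ^ s) M J 1).testBit i = true) n +
      Nat.count (fun i => tw (a + i)) n = n := by
    intro n
    induction n with
    | zero => intro _; simp
    | succ n ih =>
      intro hn
      rw [Nat.count_succ, Nat.count_succ]
      have h3 := ih (by omega)
      have h4 := testBit_sieve a (2 ^ s) M J n (by omega) 1 (by norm_num)
      have h5 := tw_iff M (a + n) (by omega) (by omega)
      have h6 : (sieve a (2 ^ s) M J 1).testBit n = true ↔ ¬ tw (a + n) := by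
        rw [h4, h5]
        constructor
        · rintro ⟨m, b1, b2, b3, b4⟩; exact ⟨m, b1, b3, b4⟩
        · rintro ⟨m, b1, b3, b4⟩; exact ⟨m, b1, by omega, b3, b4⟩
      by_cases ht : tw (a + n)
      · have : ¬ ((sieve a (2 ^ s) M J 1).testBit n = true) := by rw [h6]; simpa using ht
        rw [if_neg this, if_pos ht]; omega
      · rw [if_pos (h6.2 ht), if_neg ht]; omega
  have h7 := h2 p.1 hps
  unfold Tw
  rw [Nat.count_add]
  omega

/-- Polynomial part of the antiderivative. -/
noncomputable def Gp (u : ℝ) : ℝ :=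
  ∑ n ∈ Finset.range 66, u ^ (n + 1) / (((n + 2).factorial : ℝ) * (n + 1))

noncomputable def Hf (t : ℝ) : ℝ := -1 / log t + log (log t) + Gp (log t)

theorem hasDerivAt_Gp (u : ℝ) :
    HasDerivAt Gp (∑ n ∈ Finset.range 66, u ^ n / ((n + 2).factorial : ℝ)) u := by
  unfold Gp
  apply HasDerivAt.fun_sum
  intro n _
  have h := ((hasDerivAt_pow (n + 1) u).div_const (((n + 2).factorial : ℝ) * (n + 1)))
  refine h.congr_deriv ?_
  have h1 : ((n : ℝ) + 1) ≠ 0 := by positivity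
  have h2 : ((n + 2).factorial : ℝ) ≠ 0 := by positivity
  rw [Nat.add_sub_cancel, div_eq_div_iff (by positivity) h2]
  push_cast
  ring

noncomputable def Tp (u : ℝ) : ℝ := ∑ n ∈ Finset.range 68, u ^ n / (n.factorial : ℝ)

theorem hasDerivAt_Hf (t : ℝ) (ht : 1 < t) :
    HasDerivAt Hf (Tp (log t) / t * (1 / log t ^ 2)) t := by
  have hL : 0 < log t := Real.log_pos ht
  have ht0 : t ≠ 0 := by positivity
  have h1 := Real.hasDerivAt_log ht0
  have h2 := (h1.inv hL.ne').neg
  have h3 := h1.log hL.ne'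
  have h4 := (hasDerivAt_Gp (log t)).comp t h1
  have h5 := (h2.add h3).add h4
  have h6 := h5.congr_of_eventuallyEq (f₁ := Hf)
    (Eventually.of_forall fun y => by simp [Hf, neg_div])
  refine h6.congr_deriv ?_
  have eT : Tp (log t) = log t ^ 2 * (∑ n ∈ Finset.range 66, log t ^ n / ((n + 2).factorial : ℝ))
      + log t + 1 := by
    unfold Tp
    rw [Finset.sum_range_succ', Finset.sum_range_succ', Finset.mul_sum]
    simp only [zero_add, pow_one, pow_zero, Nat.factorial_one, Nat.factorial_zero, Nat.cast_one,
      div_one]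
    congr 2
    apply Finset.sum_congr rfl
    intro n _
    rw [pow_succ, pow_succ]; ring
  rw [eT]
  generalize (∑ n ∈ Finset.range 66, log t ^ n / ((n + 2).factorial : ℝ)) = Z
  field_simp
  ring

theorem Tp_le (u : ℝ) (hu : 0 ≤ u) : Tp u ≤ exp u := Real.sum_le_exp_of_nonneg hu 68

theorem le_Tp (u : ℝ) (hu : 0 ≤ u) (hu2 : u ≤ 18) : exp u ≤ Tp u + 1 / 10 ^ 10 := by
  have h := Complex.exp_bound' (x := (u : ℂ)) (n := 68) (by
    rw [Complex.norm_real, Real.norm_eq_abs, abs_of_nonneg hu]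
    push_cast
    rw [div_le_iff₀ (by norm_num)]
    linarith)
  have e : Complex.exp u - ∑ m ∈ Finset.range 68, (u : ℂ) ^ m / (m.factorial : ℂ) =
      ((exp u - Tp u : ℝ) : ℂ) := by
    unfold Tp; push_cast; rfl
  rw [e, Complex.norm_real, Complex.norm_real, Real.norm_eq_abs, Real.norm_eq_abs,
    abs_of_nonneg hu] at h
  have h2 : u ^ 68 / ((Nat.factorial 68 : ℕ) : ℝ) * 2 ≤ 1 / 10 ^ 10 := by
    calc u ^ 68 / ((Nat.factorial 68 : ℕ) : ℝ) * 2
        ≤ (18 : ℝ) ^ 68 / ((Nat.factorial 68 : ℕ) : ℝ) * 2 := by gcongr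
      _ ≤ 1 / 10 ^ 10 := by norm_num [Nat.factorial]
  have h3 := le_abs_self (exp u - Tp u)
  linarith

theorem integrable_aux (a b : ℝ) (ha : 2 ≤ a) (hb : 2 ≤ b) :
    IntervalIntegrable (fun t => 1 / log t ^ 2) MeasureTheory.volume a b := by
  apply ContinuousOn.intervalIntegrable
  intro t ht
  have h2 : 2 ≤ t := le_trans (le_min ha hb) ht.1
  have hL : 0 < log t := Real.log_pos (by linarith)
  have ht0 : t ≠ 0 := by positivity
  apply ContinuousAt.continuousWithinAt
  exact continuousAt_const.div ((Real.continuousAt_log ht0).pow 2) (by positivity)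

theorem continuousOn_dH (x : ℝ) (hx : 2 ≤ x) :
    ContinuousOn (fun t => Tp (log t) / t * (1 / log t ^ 2)) (uIcc 2 x) := by
  intro t ht
  rw [uIcc_of_le hx] at ht
  have h2 : 2 ≤ t := ht.1
  have hL : 0 < log t := Real.log_pos (by linarith)
  have ht0 : t ≠ 0 := by positivity
  have hT : Continuous Tp := by unfold Tp; fun_prop
  apply ContinuousAt.continuousWithinAt
  have h1 := Real.continuousAt_log ht0
  have h3 : ContinuousAt (fun t => Tp (log t)) t := hT.continuousAt.comp h1
  exact (h3.div continuousAt_id ht0).mul (continuousAt_const.div (h1.pow 2) (by positivity))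

theorem integral_dH (x : ℝ) (hx : 2 ≤ x) :
    ∫ t in (2:ℝ)..x, Tp (log t) / t * (1 / log t ^ 2) = Hf x - Hf 2 := by
  apply intervalIntegral.integral_eq_sub_of_hasDerivAt
  · intro t ht
    rw [uIcc_of_le hx] at ht
    exact hasDerivAt_Hf t (by linarith [ht.1])
  · exact (continuousOn_dH x hx).intervalIntegrable

theorem Li2_ge (x : ℝ) (hx : 2 ≤ x) : Hf x - Hf 2 ≤ Li2 x := by
  rw [← integral_dH x hx]
  unfold Li2
  apply intervalIntegral.integral_mono_on hx (continuousOn_dH x hx).intervalIntegrable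
    (integrable_aux 2 x le_rfl hx)
  intro t ht
  have h2 : 2 ≤ t := ht.1
  have hL : 0 < log t := Real.log_pos (by linarith)
  have h := Tp_le (log t) hL.le
  rw [Real.exp_log (by linarith)] at h
  have : Tp (log t) / t ≤ 1 := by rw [div_le_one (by linarith)]; exact h
  calc _ ≤ 1 * (1 / log t ^ 2) := by gcongr
    _ = _ := one_mul _

theorem Li2_le (x : ℝ) (hx : 2 ≤ x) (hx2 : log x ≤ 18) :
    (1 - 1 / 10 ^ 10) * Li2 x ≤ Hf x - Hf 2 := by
  rw [← integral_dH x hx]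
  unfold Li2
  rw [← intervalIntegral.integral_const_mul]
  apply intervalIntegral.integral_mono_on hx ((integrable_aux 2 x le_rfl hx).const_mul _)
    (continuousOn_dH x hx).intervalIntegrable
  intro t ht
  have h2 : 2 ≤ t := ht.1
  have hL : 0 < log t := Real.log_pos (by linarith)
  have hle : log t ≤ 18 := le_trans (Real.log_le_log (by linarith) ht.2) hx2
  have h := le_Tp (log t) hL.le hle
  rw [Real.exp_log (by linarith)] at h
  have : (1 - 1 / 10 ^ 10) ≤ Tp (log t) / t := by
    rw [le_div_iff₀ (by linarith)]; nlinarith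
  gcongr

theorem Li2_sub_le (A x l : ℝ) (hA : 2 ≤ A) (hx : A ≤ x) (hl : 0 < l) (hlA : l ≤ log A) :
    Li2 x ≤ Li2 A + (x - A) * (1 / l ^ 2) := by
  have h : Li2 x = Li2 A + ∫ t in A..x, 1 / log t ^ 2 :=
    (intervalIntegral.integral_add_adjacent_intervals (integrable_aux 2 A le_rfl hA)
      (integrable_aux A x hA (by linarith))).symm
  have h2 : ∫ t in A..x, 1 / log t ^ 2 ≤ ∫ t in A..x, 1 / l ^ 2 := by
    apply intervalIntegral.integral_mono_on hx (integrable_aux A x hA (by linarith)) (by simp)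
    intro t ht
    have : l ≤ log t := hlA.trans (Real.log_le_log (by linarith) ht.1)
    gcongr
  rw [intervalIntegral.integral_const, smul_eq_mul] at h2
  linarith

theorem Li2_sub_ge (A x u : ℝ) (hA : 2 ≤ A) (hx : A ≤ x) (hu : log x ≤ u) :
    Li2 A + (x - A) * (1 / u ^ 2) ≤ Li2 x := by
  have h : Li2 x = Li2 A + ∫ t in A..x, 1 / log t ^ 2 :=
    (intervalIntegral.integral_add_adjacent_intervals (integrable_aux 2 A le_rfl hA)
      (integrable_aux A x hA (by linarith))).symm
  have h2 : ∫ t in A..x, 1 / u ^ 2 ≤ ∫ t in A..x, 1 / log t ^ 2 := by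
    apply intervalIntegral.integral_mono_on hx (by simp) (integrable_aux A x hA (by linarith))
    intro t ht
    have h1 : log t ≤ u := (Real.log_le_log (by linarith [ht.1]) ht.2).trans hu
    have h0 : 0 < log t := Real.log_pos (by linarith [ht.1])
    gcongr
  rw [intervalIntegral.integral_const, smul_eq_mul] at h2
  linarith

theorem Gp_mono (a b : ℝ) (ha : 0 ≤ a) (hab : a ≤ b) : Gp a ≤ Gp b := by
  unfold Gp
  apply Finset.sum_le_sum
  intro n _
  gcongr

/-- Two-sided bound for `log (1 - z)`. -/
theorem log_one_sub_bounds (z : ℝ) (hz0 : 0 ≤ z) (hz : z < 1) (n : ℕ) :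
    -(∑ i ∈ Finset.range n, z ^ (i + 1) / (i + 1)) - z ^ (n + 1) / (1 - z) ≤ log (1 - z) ∧
    log (1 - z) ≤ -(∑ i ∈ Finset.range n, z ^ (i + 1) / (i + 1)) + z ^ (n + 1) / (1 - z) := by
  have h := Real.abs_log_sub_add_sum_range_le (x := z) (by rw [abs_of_nonneg hz0]; exact hz) n
  rw [abs_of_nonneg hz0] at h
  have := abs_le.1 h
  constructor <;> linarith [this.1, this.2]

theorem log_175 : (2.86220 : ℝ) ≤ log 17.5 ∧ log 17.5 ≤ (2.86221 : ℝ) := by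
  have h := log_one_sub_bounds (29 / 64) (by norm_num) (by norm_num) 20
  have e : log (17.5 : ℝ) = 5 * log 2 + log (1 - 29 / 64) := by
    rw [← Real.log_rpow (by norm_num), ← Real.log_mul (by norm_num) (by norm_num)]
    norm_num
  have h1 := Real.log_two_gt_d9
  have h2 := Real.log_two_lt_d9
  simp only [Finset.sum_range_succ, Finset.sum_range_zero] at h
  norm_num1 at h
  rw [e]
  constructor <;> linarith [h.1, h.2]

theorem Hf2_bounds : (-1.4175 : ℝ) ≤ Hf 2 ∧ Hf 2 ≤ -1.4174 := by
  have h1 := Real.log_two_gt_d9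
  have h2 := Real.log_two_lt_d9
  have ha := log_one_sub_bounds 0.3068528192 (by norm_num) (by norm_num) 15
  have hb := log_one_sub_bounds 0.3068528197 (by norm_num) (by norm_num) 15
  simp only [Finset.sum_range_succ, Finset.sum_range_zero] at ha hb
  norm_num1 at ha hb
  have hlo : log (0.6931471803 : ℝ) ≤ log (log 2) := Real.log_le_log (by norm_num) h1.le
  have hhi : log (log 2) ≤ log (0.6931471808 : ℝ) := Real.log_le_log (by linarith) h2.le
  norm_num1 at hlo hhi
  have g1 := Gp_mono 0.6931471803 (log 2) (by norm_num) h1.le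
  have g2 := Gp_mono (log 2) 0.6931471808 (by linarith) h2.le
  have g3 : (0.39176 : ℝ) ≤ Gp 0.6931471803 := by
    unfold Gp
    simp only [Finset.sum_range_succ, Finset.sum_range_zero, Nat.factorial]
    norm_num1
  have g4 : Gp 0.6931471808 ≤ (0.39177 : ℝ) := by
    unfold Gp
    simp only [Finset.sum_range_succ, Finset.sum_range_zero, Nat.factorial]
    norm_num1
  have i1 : (-1.44270 : ℝ) ≤ -1 / log 2 := by
    rw [le_div_iff₀ (by linarith)]; linarith
  have i2 : -1 / log 2 ≤ (-1.44269 : ℝ) := by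
    rw [div_le_iff₀ (by linarith)]; linarith
  unfold Hf
  constructor <;> linarith [ha.1, ha.2, hb.1, hb.2]

theorem log_near (l : ℝ) (hl : 0 < l) :
    2.86220 + 1 - 17.5 / l ≤ log l ∧ log l ≤ 2.86221 + l / 17.5 - 1 := by
  have e : log l = log 17.5 + log (l / 17.5) := by
    rw [← Real.log_mul (by norm_num) (by positivity)]
    congr 1
    field_simp
  have h1 := Real.one_sub_inv_le_log_of_pos (x := l / 17.5) (by positivity)
  have h2 := Real.log_le_sub_one_of_pos (x := l / 17.5) (by positivity)
  rw [inv_div] at h1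
  rw [e]
  constructor <;> linarith [log_175.1, log_175.2]

theorem Li2_lo (A l : ℝ) (hA : 2 ≤ A) (hl : 0 < l) (hlA : l ≤ log A) :
    -1 / l + (2.86220 + 1 - 17.5 / l) + Gp l + 1.4174 ≤ Li2 A := by
  have h := Li2_ge A hA
  have h1 := (log_near l hl).1
  have h2 := Real.log_le_log hl hlA
  have h3 := Gp_mono l (log A) hl.le hlA
  have h4 : -1 / l ≤ -1 / log A := by
    rw [neg_div, neg_div]; gcongr
  unfold Hf at h
  have := Hf2_bounds.2
  unfold Hf at this
  linarith

theorem Li2_hi (A u : ℝ) (hA : 2 ≤ A) (hu : log A ≤ u) (hu2 : u ≤ 18) :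
    (1 - 1 / 10 ^ 10) * Li2 A ≤ -1 / u + (2.86221 + u / 17.5 - 1) + Gp u + 1.4175 := by
  have h := Li2_le A hA (hu.trans hu2)
  have h0 : 0 < log A := Real.log_pos (by linarith)
  have h1 := (log_near u (by linarith)).2
  have h2 := Real.log_le_log h0 hu
  have h3 := Gp_mono (log A) u h0.le hu
  have h4 : -1 / log A ≤ -1 / u := by
    rw [neg_div, neg_div]; gcongr
  unfold Hf at h
  have := Hf2_bounds.1
  unfold Hf at this
  linarith

def isP (p : ℕ) : Bool :=
  Nat.beq (Nat.gcd p (Nat.factorial (bif Nat.ble p 65 then p - 1 else 64))) 1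

def numf (i : ℕ) : ℕ := bif isP i then i ^ 3 * (i - 2) else 1
def denf (i : ℕ) : ℕ := bif isP i then (i - 1) ^ 3 * (i + 1) else 1

def treeProd (f : ℕ → ℕ) (j : ℕ) : ℕ → ℕ :=
  Nat.rec (motive := fun _ => ℕ → ℕ) f (fun j ih lo => ih lo * ih (lo + 2 ^ j)) j

theorem treeProd_eq (f : ℕ → ℕ) (j : ℕ) : ∀ lo,
    treeProd f j lo = ∏ i ∈ Finset.Ico lo (lo + 2 ^ j), f i := by
  induction j with
  | zero => intro lo; simp [treeProd]
  | succ j ih =>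
    intro lo
    change treeProd f j lo * treeProd f j (lo + 2 ^ j) = _
    rw [ih, ih, Finset.prod_Ico_consecutive _ (Nat.le_add_right _ _)
      (Nat.le_add_right _ _), pow_succ, mul_two, add_assoc]

theorem isP_iff (p : ℕ) (h3 : 3 ≤ p) (hp : p < 4225) : isP p = true ↔ p.Prime := by
  unfold isP
  rw [Nat.beq_eq]
  have key : ∀ d, d < p → (p < (d + 1) ^ 2) → (Nat.gcd p (Nat.factorial d) = 1 ↔ p.Prime) := by
    intro d hd hd2
    constructor
    · intro h
      by_contra hc
      have h1 := Nat.minFac_sq_le_self (by omega : 0 < p) hc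
      have h2 : p.minFac < d + 1 := lt_of_pow_lt_pow_left₀ 2 (by omega) (lt_of_le_of_lt h1 hd2)
      have hpp := Nat.minFac_prime (by omega : p ≠ 1)
      have h4 : p.minFac ∣ Nat.factorial d := (hpp.dvd_factorial).2 (by omega)
      have h5 := Nat.dvd_gcd (Nat.minFac_dvd p) h4
      rw [h] at h5
      exact hpp.one_lt.ne' (Nat.dvd_one.1 h5)
    · intro h
      exact (Nat.Prime.coprime_iff_not_dvd h).2 (fun h' => by
        have := (h.dvd_factorial).1 h'; omega)
  by_cases h : p ≤ 65
  · rw [(show Nat.ble p 65 = true by rw [Nat.ble_eq]; exact h), cond_true]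
    apply key _ (by omega)
    have : p - 1 + 1 = p := by omega
    rw [this]; nlinarith
  · have : Nat.ble p 65 = false := by
      rw [← Bool.not_eq_true, Nat.ble_eq]; exact h
    rw [this, cond_false]
    exact key 64 (by omega) (by omega)

/-- Local factor of the Euler product for `C₂ · π² / 12`. -/
noncomputable def cf (i : ℕ) : ℝ :=
  (if i.Prime ∧ 2 < i then 1 - 1 / ((i : ℝ) - 1) ^ 2 else 1) *
    (if i.Prime then (1 - ((i : ℝ) ^ 2)⁻¹)⁻¹ else 1)

theorem cf_prime (i : ℕ) (h : i.Prime) (h2 : 2 < i) :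
    cf i = ((i : ℝ) ^ 3 * ((i : ℝ) - 2)) / (((i : ℝ) - 1) ^ 3 * ((i : ℝ) + 1)) := by
  unfold cf
  rw [if_pos ⟨h, h2⟩, if_pos h]
  have h3 : (3 : ℝ) ≤ i := by exact_mod_cast h2
  have a1 : (i : ℝ) ≠ 0 := by linarith
  have a2 : (i : ℝ) - 1 ≠ 0 := by linarith
  have a3 : (i : ℝ) + 1 ≠ 0 := by linarith
  have e : (1 : ℝ) - ((i : ℝ) ^ 2)⁻¹ = ((i : ℝ) - 1) * ((i : ℝ) + 1) / (i : ℝ) ^ 2 := by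
    field_simp; ring
  rw [e, inv_div]
  field_simp
  ring

theorem cf_eq (i : ℕ) (h3 : 3 ≤ i) (hi : i < 4225) : cf i = (numf i : ℝ) / (denf i : ℝ) := by
  unfold numf denf
  by_cases h : i.Prime
  · rw [(isP_iff i h3 hi).2 h, cond_true, cond_true, cf_prime i h h3]
    push_cast [Nat.cast_sub (show 2 ≤ i by omega), Nat.cast_sub (show 1 ≤ i by omega)]
    rfl
  · have : isP i = false := by
      rw [← Bool.not_eq_true, isP_iff i h3 hi]; exact h
    rw [this]
    simp [cf, h]

theorem cf_le_one (i : ℕ) (h3 : 3 ≤ i) : cf i ≤ 1 := by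
  by_cases h : i.Prime
  · rw [cf_prime i h h3]
    have h3' : (3 : ℝ) ≤ i := by exact_mod_cast h3
    have : 0 < ((i : ℝ) - 1) ^ 3 * ((i : ℝ) + 1) :=
      mul_pos (pow_pos (by linarith) 3) (by linarith)
    rw [div_le_one this]
    nlinarith
  · simp [cf, h]

theorem cf_nonneg (i : ℕ) (h3 : 3 ≤ i) : 0 ≤ cf i := by
  by_cases h : i.Prime
  · rw [cf_prime i h h3]
    have h3' : (3 : ℝ) ≤ i := by exact_mod_cast h3
    have : 0 < ((i : ℝ) - 1) ^ 3 * ((i : ℝ) + 1) :=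
      mul_pos (pow_pos (by linarith) 3) (by linarith)
    apply div_nonneg _ this.le
    apply mul_nonneg (by positivity) (by linarith)
  · simp [cf, h]

noncomputable def phi (m : ℝ) : ℝ := 1 + 1 / (m - 2) ^ 2

theorem phi_step (i : ℕ) (h3 : 3 ≤ i) : phi ((i + 1 : ℕ) : ℝ) ≤ phi i * cf i := by
  have h3' : (3 : ℝ) ≤ i := by exact_mod_cast h3
  unfold phi
  push_cast
  by_cases h : i.Prime
  · rw [cf_prime i h h3]
    obtain ⟨y, hy⟩ : ∃ y : ℝ, (i : ℝ) = y + 3 := ⟨i - 3, by ring⟩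
    have hy0 : 0 ≤ y := by linarith
    rw [hy]
    have e1 : y + 3 + 1 - 2 = y + 2 := by ring
    have e2 : y + 3 - 2 = y + 1 := by ring
    have e3 : y + 3 - 1 = y + 2 := by ring
    have e4 : y + 3 + 1 = y + 4 := by ring
    rw [e1, e2, e3, e4]
    have e5 : (1 + 1 / (y + 2) ^ 2) = ((y + 2) ^ 2 + 1) / (y + 2) ^ 2 := by field_simp
    have e6 : (1 + 1 / (y + 1) ^ 2) * ((y + 3) ^ 3 * (y + 1) / ((y + 2) ^ 3 * (y + 4))) =
      (((y + 1) ^ 2 + 1) * (y + 3) ^ 3) / ((y + 1) * (y + 2) ^ 3 * (y + 4)) := by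
      field_simp
    rw [e5, e6, div_le_div_iff₀ (by positivity) (by positivity), ← sub_nonneg]
    ring_nf
    positivity
  · simp only [cf, h, false_and, if_false, mul_one]
    have b1 : 0 < ((i : ℝ) - 2) ^ 2 := pow_pos (by linarith) 2
    have b2 : ((i : ℝ) - 2) ^ 2 ≤ ((i : ℝ) + 1 - 2) ^ 2 := by nlinarith
    have := one_div_le_one_div_of_le b1 b2
    linarith

theorem prod_ge (P n : ℕ) (hP : 3 ≤ P) (hn : P ≤ n) (hpos : 0 ≤ ∏ i ∈ Finset.range P, cf i) :
    (∏ i ∈ Finset.range P, cf i) * phi n ≤ (∏ i ∈ Finset.range n, cf i) * phi P ∧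
    ∏ i ∈ Finset.range n, cf i ≤ ∏ i ∈ Finset.range P, cf i ∧
    0 ≤ ∏ i ∈ Finset.range n, cf i := by
  induction n, hn using Nat.le_induction with
  | base => exact ⟨le_rfl, le_rfl, hpos⟩
  | succ n hn ih =>
    obtain ⟨h1, h2, h3⟩ := ih
    have a1 := phi_step n (by omega)
    have a2 := cf_le_one n (by omega)
    have a3 := cf_nonneg n (by omega)
    rw [Finset.prod_range_succ]
    refine ⟨?_, ?_, mul_nonneg h3 a3⟩
    · calc _ ≤ (∏ i ∈ Finset.range P, cf i) * (phi n * cf n) := by gcongr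
        _ = ((∏ i ∈ Finset.range P, cf i) * phi n) * cf n := by ring
        _ ≤ ((∏ i ∈ Finset.range n, cf i) * phi P) * cf n := by gcongr
        _ = _ := by ring
    · calc _ ≤ (∏ i ∈ Finset.range n, cf i) * 1 := by gcongr
        _ ≤ _ := by rw [mul_one]; exact h2

theorem tendsto_C2 : Tendsto (fun n : ℕ => ∏ i ∈ Finset.range n,
    (if i.Prime ∧ 2 < i then 1 - 1 / ((i : ℝ) - 1) ^ 2 else 1)) atTop (nhds (C2 / 2)) := by
  have hf : Multipliable (fun i : ℕ =>
      (if i.Prime ∧ 2 < i then 1 - 1 / ((i : ℝ) - 1) ^ 2 else 1)) := by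
    have e : (fun i : ℕ => (if i.Prime ∧ 2 < i then 1 - 1 / ((i : ℝ) - 1) ^ 2 else 1)) =
        fun i : ℕ => 1 + (if i.Prime ∧ 2 < i then - (1 / ((i : ℝ) - 1) ^ 2) else 0) := by
      funext i; split_ifs <;> ring
    rw [e]
    apply Real.multipliable_one_add_of_summable
    have hs : Summable (fun i : ℕ => 4 * (1 / (i : ℝ) ^ 2)) :=
      (Real.summable_one_div_nat_pow.2 (by norm_num)).mul_left 4
    apply Summable.of_norm_bounded hs
    intro i
    split_ifs with h
    · have h3 : (3 : ℝ) ≤ i := by exact_mod_cast h.2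
      have : 0 < (i : ℝ) - 1 := by linarith
      rw [norm_neg, Real.norm_eq_abs, abs_of_nonneg (by positivity), ← mul_div_assoc,
        div_le_div_iff₀ (by positivity) (by positivity)]
      nlinarith
    · simp
  have h := hf.hasProd.tendsto_prod_nat
  convert h using 2
  unfold C2
  rw [mul_div_cancel_left₀ _ (two_ne_zero)]
  have h2 := tprod_subtype {p : ℕ | p.Prime ∧ 2 < p} (fun p : ℕ => 1 - 1 / ((p : ℝ) - 1) ^ 2)
  refine h2.trans ?_
  apply tprod_congr
  intro i
  simp [Set.mulIndicator_apply]

noncomputable def invSq : ℕ →*₀ ℝ where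
  toFun n := ((n : ℝ) ^ 2)⁻¹
  map_zero' := by simp
  map_one' := by simp
  map_mul' a b := by push_cast; rw [mul_pow, mul_inv]

theorem tendsto_zeta : Tendsto (fun n : ℕ => ∏ i ∈ Finset.range n,
    (if i.Prime then (1 - ((i : ℝ) ^ 2)⁻¹)⁻¹ else 1)) atTop (nhds (π ^ 2 / 6)) := by
  have hz : HasSum (fun n => invSq n) (π ^ 2 / 6) := by
    have := hasSum_zeta_two
    simpa [invSq] using this
  have hs : Summable (fun n => ‖invSq n‖) := hz.summable.norm
  have h := EulerProduct.eulerProduct_completely_multiplicative hs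
  rw [hz.tsum_eq] at h
  convert h using 2 with n
  rw [Nat.primesBelow, Finset.prod_filter]
  rfl

theorem tendsto_cf : Tendsto (fun n : ℕ => ∏ i ∈ Finset.range n, cf i) atTop
    (nhds (C2 / 2 * (π ^ 2 / 6))) := by
  have h := tendsto_C2.mul tendsto_zeta
  convert h using 2 with n
  rw [← Finset.prod_mul_distrib]
  rfl

theorem num_den_chk : (Nat.ble (814442000836 * treeProd denf 12 3) (10 ^ 12 * treeProd numf 12 3) &&
    Nat.ble (10 ^ 12 * treeProd numf 12 3) (814442000837 * treeProd denf 12 3)) = true := by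
  decide +kernel

theorem denf_pos (i : ℕ) (h : 3 ≤ i) : 0 < denf i := by
  unfold denf
  cases isP i
  · simp
  · simp only [cond_true]
    have : 0 < i - 1 := by omega
    positivity

theorem prod_4099 : (4 / 3 * (814442000836 / 10 ^ 12) : ℝ) ≤ ∏ i ∈ Finset.range 4099, cf i ∧
    ∏ i ∈ Finset.range 4099, cf i ≤ (4 / 3 * (814442000837 / 10 ^ 12) : ℝ) := by
  have hsplit : ∏ i ∈ Finset.range 4099, cf i =
      4 / 3 * ((treeProd numf 12 3 : ℕ) / (treeProd denf 12 3 : ℕ) : ℝ) := by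
    rw [← Finset.prod_range_mul_prod_Ico cf (show 3 ≤ 4099 by norm_num), treeProd_eq, treeProd_eq,
      Nat.cast_prod, Nat.cast_prod, ← Finset.prod_div_distrib]
    congr 1
    · rw [Finset.prod_range_succ, Finset.prod_range_succ, Finset.prod_range_succ]
      have h0 : ¬ Nat.Prime 0 := by norm_num
      have h1 : ¬ Nat.Prime 1 := by norm_num
      simp only [cf, h0, h1, Nat.prime_two]
      norm_num
    · apply Finset.prod_congr (by norm_num)
      intro i hi
      rw [Finset.mem_Ico] at hi
      exact cf_eq i hi.1 (by omega)
  have hD : 0 < treeProd denf 12 3 := by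
    rw [treeProd_eq]
    apply Finset.prod_pos
    intro i hi
    exact denf_pos i (Finset.mem_Ico.1 hi).1
  have h := num_den_chk
  rw [Bool.and_eq_true, Nat.ble_eq, Nat.ble_eq] at h
  obtain ⟨h1, h2⟩ := h
  rw [hsplit]
  clear hsplit
  revert hD h1 h2
  generalize treeProd denf 12 3 = D
  generalize treeProd numf 12 3 = N
  intro hD h1 h2
  have hD' : (0 : ℝ) < D := by exact_mod_cast hD
  have h1' : (814442000836 : ℝ) * D ≤ 10 ^ 12 * N := by exact_mod_cast h1
  have h2' : (10 : ℝ) ^ 12 * N ≤ 814442000837 * D := by exact_mod_cast h2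
  have r1 : (814442000836 / 10 ^ 12 : ℝ) ≤ (N : ℝ) / D := by
    rw [div_le_div_iff₀ (by norm_num) hD']; linarith
  have r2 : (N : ℝ) / D ≤ (814442000837 / 10 ^ 12 : ℝ) := by
    rw [div_le_div_iff₀ hD' (by norm_num)]; linarith
  constructor <;> linarith

theorem C2_lim (P : ℕ) (hP3 : 3 ≤ P) (hpos : 0 ≤ ∏ i ∈ Finset.range P, cf i) :
    C2 / 2 * (π ^ 2 / 6) ≤ ∏ i ∈ Finset.range P, cf i ∧
    (∏ i ∈ Finset.range P, cf i) / phi P ≤ C2 / 2 * (π ^ 2 / 6) := by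
  have hph : ∀ n : ℕ, 1 ≤ phi n := by
    intro n
    unfold phi
    have : 0 ≤ 1 / ((n : ℝ) - 2) ^ 2 := by positivity
    linarith
  constructor
  · apply le_of_tendsto tendsto_cf
    filter_upwards [eventually_ge_atTop P] with n hn
    exact (prod_ge P n hP3 hn hpos).2.1
  · apply ge_of_tendsto tendsto_cf
    filter_upwards [eventually_ge_atTop P] with n hn
    have h1 := (prod_ge P n hP3 hn hpos).1
    have h2 := hph n
    rw [div_le_iff₀ (lt_of_lt_of_le one_pos (hph P))]
    refine le_trans ?_ h1
    nlinarith

theorem C2_bounds : (1.3203235 : ℝ) ≤ C2 ∧ C2 ≤ 1.3203237 := by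
  have hP := prod_4099
  have hpos : 0 ≤ ∏ i ∈ Finset.range 4099, cf i := le_trans (by norm_num) hP.1
  obtain ⟨hu, hl⟩ := C2_lim 4099 (by norm_num) hpos
  have hphi : phi (4099 : ℕ) = 16785410 / 16785409 := by unfold phi; norm_num
  rw [hphi] at hl
  revert hP hpos hu hl
  generalize ∏ i ∈ Finset.range 4099, cf i = Q
  intro hP hpos hu hl
  have p1 := Real.pi_gt_d20
  have p2 := Real.pi_lt_d20
  have q1 : (9.869604401 : ℝ) ≤ π ^ 2 := by nlinarith
  have q2 : π ^ 2 ≤ (9.869604402 : ℝ) := by nlinarith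
  have hl' : Q * 16785409 / 16785410 ≤ C2 / 2 * (π ^ 2 / 6) := by
    refine le_trans (le_of_eq ?_) hl
    field_simp
  have hC : 0 ≤ C2 := by
    by_contra hc
    push Not at hc
    have : C2 / 2 * (π ^ 2 / 6) < 0 := by nlinarith
    linarith
  obtain ⟨hP1, hP2⟩ := hP
  constructor
  · nlinarith
  · nlinarith

theorem twin_form (p : ℕ) (h1 : p.Prime) (h2 : (p + 2).Prime) (h5 : 5 ≤ p) :
    ∃ j, 1 ≤ j ∧ p = 6 * j - 1 := by
  have a2 : ¬ 2 ∣ p := fun h => by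
    have := (Nat.prime_dvd_prime_iff_eq Nat.prime_two h1).1 h; omega
  have a3 : ¬ 3 ∣ p := fun h => by
    have := (Nat.prime_dvd_prime_iff_eq Nat.prime_three h1).1 h; omega
  have b3 : ¬ 3 ∣ p + 2 := fun h => by
    have := (Nat.prime_dvd_prime_iff_eq Nat.prime_three h2).1 h; omega
  have h3 : p % 3 = 2 := by omega
  have h6 : p % 6 = 5 := by omega
  refine ⟨(p + 1) / 6, ?_, ?_⟩ <;> omega

open Classical in
theorem piTwin_eq (k : ℕ) (hk : 1 ≤ k) : piTwin ((6 * k + 1 : ℕ) : ℝ) = 1 + Tw (k + 1) := by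
  unfold piTwin Tw
  have e : {p : ℕ | p.Prime ∧ (p + 2).Prime ∧ ((p : ℝ) + 2) ≤ ((6 * k + 1 : ℕ) : ℝ)} =
      ((insert 3 (((Finset.range (k + 1)).filter tw).image (fun j => 6 * j - 1)) : Finset ℕ) :
        Set ℕ) := by
    ext p
    simp only [Set.mem_ofPred_eq, Finset.coe_insert, Finset.coe_image, Set.mem_insert_iff,
      Set.mem_image, Finset.mem_coe, Finset.mem_filter, Finset.mem_range]
    constructor
    · rintro ⟨h1, h2, h3⟩
      have h3' : p + 2 ≤ 6 * k + 1 := by exact_mod_cast h3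
      by_cases hp : p = 3
      · exact Or.inl hp
      right
      have h5 : 5 ≤ p := by
        by_contra hc
        have := h1.two_le
        interval_cases p
        · exact absurd h2 (by norm_num)
        · exact hp rfl
        · exact absurd h1 (by norm_num)
      obtain ⟨j, hj, rfl⟩ := twin_form p h1 h2 h5
      refine ⟨j, ⟨by omega, h1, ?_⟩, rfl⟩
      have : 6 * j - 1 + 2 = 6 * j + 1 := by omega
      rwa [this] at h2
    · rintro (rfl | ⟨j, ⟨hj, h1, h2⟩, rfl⟩)
      · refine ⟨by norm_num, by norm_num, ?_⟩
        have : 3 + 2 ≤ 6 * k + 1 := by omega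
        exact_mod_cast this
      · have hj0 : j ≠ 0 := by
          rintro rfl
          exact absurd h1 (by norm_num)
        have : 6 * j - 1 + 2 = 6 * j + 1 := by omega
        refine ⟨h1, by rwa [this], ?_⟩
        have h3 : 6 * j - 1 + 2 ≤ 6 * k + 1 := by omega
        exact_mod_cast h3
  rw [e, Nat.card_eq_card_toFinset, Finset.toFinset_coe, Finset.card_insert_of_notMem,
    Finset.card_image_of_injOn, Nat.count_eq_card_filter_range, add_comm]
  · intro a ha b hb hab
    simp only [Finset.coe_filter, Finset.mem_range, Set.mem_ofPred_eq] at ha hb hab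
    have h1 := ha.2.1.two_le
    have h2 := hb.2.1.two_le
    omega
  · simp only [Finset.mem_image, not_exists]
    intro j hj
    omega

/-- Linear lower and upper bounds (scaled by `10 ^ 10`) for `C₂ Li₂` on the block of length
`131072` starting at `65536 m`. -/
def AOK (m Blo Bhi slo shi : ℕ) : Prop :=
  ∀ n : ℕ, 65536 * m ≤ n → n ≤ 65536 * m + 131072 →
    ((Blo + slo * (n - 65536 * m) : ℕ) : ℝ) ≤ 10 ^ 10 * (C2 * Li2 n) ∧
    10 ^ 10 * (C2 * Li2 n) ≤ ((Bhi + shi * (n - 65536 * m) : ℕ) : ℝ)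

/-- Partial sum for `- log (1 - z)`. -/
noncomputable def Sz (z : ℝ) : ℝ := ∑ i ∈ Finset.range 30, z ^ (i + 1) / (i + 1)

theorem log_anchor (m : ℕ) (hm : 0 < m) (hm2 : m ≤ 1024) (z l u : ℝ) (hz : z = (1024 - m) / 1024)
    (hl : l ≤ 26 * 0.6931471803 - Sz z - z ^ 31 / (1 - z))
    (hu : 26 * 0.6931471808 - Sz z + z ^ 31 / (1 - z) ≤ u) :
    l ≤ log ((65536 * m : ℕ) : ℝ) ∧ log ((65536 * m : ℕ) : ℝ) ≤ u := by
  have hm' : (0 : ℝ) < m := by exact_mod_cast hm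
  have hm2' : (m : ℝ) ≤ 1024 := by exact_mod_cast hm2
  have h1z : 1 - z = m / 1024 := by rw [hz]; ring
  have h := log_one_sub_bounds z (by rw [hz]; apply div_nonneg <;> linarith)
    (by rw [hz, div_lt_one (by norm_num)]; linarith) 30
  have e : log ((65536 * m : ℕ) : ℝ) = 26 * log 2 + log (1 - z) := by
    rw [h1z, ← Real.log_rpow (by norm_num), ← Real.log_mul (by norm_num) (by positivity)]
    congr 1
    push_cast
    norm_num
    ring
  have h1 := Real.log_two_gt_d9
  have h2 := Real.log_two_lt_d9
  unfold Sz at hl hu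
  rw [e]
  constructor <;> linarith [h.1, h.2]

theorem anchor_gen (m Blo Bhi slo shi : ℕ) (hm : 0 < m) (hm2 : m ≤ 1024) (z l u q1 q2 : ℝ)
    (hz : z = (1024 - m) / 1024)
    (hl : l ≤ 26 * 0.6931471803 - Sz z - z ^ 31 / (1 - z))
    (hu : 26 * 0.6931471808 - Sz z + z ^ 31 / (1 - z) ≤ u) (hl0 : 0 < l) (hu18 : u ≤ 18)
    (hg1 : q1 ≤ -1 / l + (2.86220 + 1 - 17.5 / l) + Gp l + 1.4174)
    (hg2 : -1 / u + (2.86221 + u / 17.5 - 1) + Gp u + 1.4175 ≤ q2)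
    (hq0 : 0 ≤ q1)
    (hBlo : (Blo : ℝ) ≤ 13203235000 / 10 ^ 10 * q1 * 10 ^ 10)
    (hBhi : 13203237000 * q2 ≤ (Bhi : ℝ) * (1 - 1 / 10 ^ 10))
    (hslo : (slo : ℝ) ≤ 13203235000 * (1 / (u + 2 / m) ^ 2))
    (hshi : 13203237000 * (1 / l ^ 2) ≤ (shi : ℝ)) :
    AOK m Blo Bhi slo shi := by
  intro n hn1 hn2
  obtain ⟨hlog1, hlog2⟩ := log_anchor m hm hm2 z l u hz hl hu
  have hm' : (0 : ℝ) < m := by exact_mod_cast hm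
  have hA2 : (2 : ℝ) ≤ ((65536 * m : ℕ) : ℝ) := by
    have : 2 ≤ 65536 * m := by omega
    exact_mod_cast this
  have hxA : ((65536 * m : ℕ) : ℝ) ≤ n := by exact_mod_cast hn1
  have hxA2 : (n : ℝ) ≤ ((65536 * m : ℕ) : ℝ) + 131072 := by exact_mod_cast hn2
  have L1 := Li2_lo _ l hA2 hl0 hlog1
  have L2 := Li2_hi _ u hA2 hlog2 hu18
  have L3 := Li2_sub_le _ (n : ℝ) l hA2 hxA hl0 hlog1
  have hlogn : log (n : ℝ) ≤ u + 2 / m := by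
    have hx0 : (0 : ℝ) < n := by linarith
    have e : log (n : ℝ) = log ((65536 * m : ℕ) : ℝ) + log ((n : ℝ) / ((65536 * m : ℕ) : ℝ)) := by
      rw [← Real.log_mul (by linarith) (by positivity)]
      congr 1
      field_simp
    have h1 := Real.log_le_sub_one_of_pos (x := (n : ℝ) / ((65536 * m : ℕ) : ℝ)) (by positivity)
    have h2 : (n : ℝ) / ((65536 * m : ℕ) : ℝ) - 1 ≤ 2 / m := by
      rw [tsub_le_iff_right, div_le_iff₀ (by linarith)]
      push_cast at hxA2 ⊢
      have : (2 / (m : ℝ) + 1) * (65536 * m) = 131072 + 65536 * m := by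
        field_simp
        ring
      linarith
    linarith
  have L4 := Li2_sub_ge _ (n : ℝ) _ hA2 hxA hlogn
  obtain ⟨c1, c2⟩ := C2_bounds
  have hc : 0 < C2 := by linarith
  have hsub : ((n - 65536 * m : ℕ) : ℝ) = (n : ℝ) - ((65536 * m : ℕ) : ℝ) := Nat.cast_sub hn1
  rw [Nat.cast_add, Nat.cast_add, Nat.cast_mul, Nat.cast_mul, hsub]
  have hL0 : 0 ≤ Li2 ((65536 * m : ℕ) : ℝ) := by linarith
  generalize Li2 (n : ℝ) = X at *
  generalize Li2 ((65536 * m : ℕ) : ℝ) = Y at *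
  obtain ⟨w, hw⟩ : ∃ w, w = (n : ℝ) - ((65536 * m : ℕ) : ℝ) := ⟨_, rfl⟩
  rw [← hw] at L3 L4 ⊢
  have hw0 : 0 ≤ w := by linarith
  obtain ⟨s1, hs1⟩ : ∃ s1, s1 = 1 / (u + 2 / (m : ℝ)) ^ 2 := ⟨_, rfl⟩
  obtain ⟨s2, hs2⟩ : ∃ s2, s2 = 1 / l ^ 2 := ⟨_, rfl⟩
  rw [← hs1] at L4 hslo
  rw [← hs2] at L3 hshi
  have hs10 : 0 ≤ s1 := by rw [hs1]; positivity
  have hs20 : 0 ≤ s2 := by rw [hs2]; positivity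
  have hX0 : 0 ≤ X := by linarith [mul_nonneg hw0 hs10]
  constructor
  · have a1 : (slo : ℝ) * w ≤ 13203235000 * s1 * w := by gcongr
    have a2 : 13203235000 * X ≤ 10 ^ 10 * (C2 * X) := by linarith [mul_le_mul_of_nonneg_right c1 hX0]
    have a3 : (13203235000 : ℝ) * (Y + w * s1) ≤ 13203235000 * X := by gcongr
    linarith
  · have a1 : 13203237000 * s2 * w ≤ (shi : ℝ) * w := by gcongr
    have a2 : 10 ^ 10 * (C2 * X) ≤ 13203237000 * X := by linarith [mul_le_mul_of_nonneg_right c2 hX0]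
    have a3 : (13203237000 : ℝ) * X ≤ 13203237000 * (Y + w * s2) := by gcongr
    have a4 : 13203237000 * ((1 - 1 / 10 ^ 10) * Y) ≤ (Bhi : ℝ) * (1 - 1 / 10 ^ 10) := by
      refine le_trans ?_ hBhi
      gcongr
      linarith
    linarith

theorem anchor_538 : AOK 538 1759887382056725 1759887688426695 43700289 43718995 := by
  apply anchor_gen 538 1759887382056725 1759887688426695 43700289 43718995 (by norm_num) (by norm_num) (243 / 512)
    17.378213442 17.378213456 133292.135 133292.138
  case hl | hu => simp only [Sz, Finset.sum_range_succ, Finset.sum_range_zero]; norm_num1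
  case hg1 | hg2 =>
    simp only [Gp, Finset.sum_range_succ, Finset.sum_range_zero, Nat.factorial]; norm_num1
  all_goals norm_num1

theorem anchor_540 : AOK 540 1765616490178220 1765616797416597 43681706 43700331 := by
  apply anchor_gen 540 1765616490178220 1765616797416597 43681706 43700331 (by norm_num) (by norm_num) (121 / 256)
    17.381924021 17.381924035 133726.052 133726.055
  case hl | hu => simp only [Sz, Finset.sum_range_succ, Finset.sum_range_zero]; norm_num1
  case hg1 | hg2 =>
    simp only [Gp, Finset.sum_range_succ, Finset.sum_range_zero, Nat.factorial]; norm_num1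
  all_goals norm_num1

theorem anchor_543 : AOK 543 1774205590642770 1774205885979829 43653983 43672487 := by
  apply anchor_gen 543 1774205590642770 1774205885979829 43653983 43672487 (by norm_num) (by norm_num) (481 / 1024)
    17.387464202 17.387464216 134376.582 134376.584
  case hl | hu => simp only [Sz, Finset.sum_range_succ, Finset.sum_range_zero]; norm_num1
  case hg1 | hg2 =>
    simp only [Gp, Finset.sum_range_succ, Finset.sum_range_zero, Nat.factorial]; norm_num1
  all_goals norm_num1

theorem anchor_690 : AOK 690 2188992163069380 2188992547685444 42479406 42493385 := by
  apply anchor_gen 690 2188992163069380 2188992547685444 42479406 42493385 (by norm_num) (by norm_num) (167 / 512)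
    17.627046479 17.627046493 165792.108 165792.112
  case hl | hu => simp only [Sz, Finset.sum_range_succ, Finset.sum_range_zero]; norm_num1
  case hg1 | hg2 =>
    simp only [Gp, Finset.sum_range_succ, Finset.sum_range_zero, Nat.factorial]; norm_num1
  all_goals norm_num1

theorem anchor_692 : AOK 692 2194560944308270 2194561316565202 42465501 42479433 := by
  apply anchor_gen 692 2194560944308270 2194561316565202 42465501 42479433 (by norm_num) (by norm_num) (83 / 256)
    17.629940837 17.629940851 166213.882 166213.885
  case hl | hu => simp only [Sz, Finset.sum_range_succ, Finset.sum_range_zero]; norm_num1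
  case hg1 | hg2 =>
    simp only [Gp, Finset.sum_range_succ, Finset.sum_range_zero, Nat.factorial]; norm_num1
  all_goals norm_num1

theorem anchor_694 : AOK 694 2200127903500730 2200128276601490 42451644 42465529 := by
  apply anchor_gen 694 2200127903500730 2200128276601490 42451644 42465529 (by norm_num) (by norm_num) (165 / 512)
    17.632826842 17.632826856 166635.518 166635.521
  case hl | hu => simp only [Sz, Finset.sum_range_succ, Finset.sum_range_zero]; norm_num1
  case hg1 | hg2 =>
    simp only [Gp, Finset.sum_range_succ, Finset.sum_range_zero, Nat.factorial]; norm_num1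
  all_goals norm_num1

theorem anchor_705 : AOK 705 2230713778320570 2230714156057477 42376252 42389884 := by
  apply anchor_gen 705 2230713778320570 2230714156057477 42376252 42389884 (by norm_num) (by norm_num) (319 / 1024)
    17.648552685 17.648552699 168952.062 168952.065
  case hl | hu => simp only [Sz, Finset.sum_range_succ, Finset.sum_range_zero]; norm_num1
  case hg1 | hg2 =>
    simp only [Gp, Finset.sum_range_succ, Finset.sum_range_zero, Nat.factorial]; norm_num1
  all_goals norm_num1

theorem anchor_722 : AOK 722 2277876922031720 2277877306917523 42262397 42275655 := by
  apply anchor_gen 722 2277876922031720 2277877306917523 42262397 42275655 (by norm_num) (by norm_num) (151 / 512)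
    17.672380021 17.672380035 172524.152 172524.155
  case hl | hu => simp only [Sz, Finset.sum_range_succ, Finset.sum_range_zero]; norm_num1
  case hg1 | hg2 =>
    simp only [Gp, Finset.sum_range_succ, Finset.sum_range_zero, Nat.factorial]; norm_num1
  all_goals norm_num1

theorem anchor_727 : AOK 727 2291724382477075 2291724782665086 42229504 42242655 := by
  apply anchor_gen 727 2291724382477075 2291724782665086 42229504 42242655 (by norm_num) (by norm_num) (297 / 1024)
    17.679281359 17.679281373 173572.945 173572.949
  case hl | hu => simp only [Sz, Finset.sum_range_succ, Finset.sum_range_zero]; norm_num1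
  case hg1 | hg2 =>
    simp only [Gp, Finset.sum_range_succ, Finset.sum_range_zero, Nat.factorial]; norm_num1
  all_goals norm_num1

theorem anchor_731 : AOK 731 2302794608456355 2302794997119132 42203380 42216446 := by
  apply anchor_gen 731 2302794608456355 2302794997119132 42203380 42216446 (by norm_num) (by norm_num) (293 / 1024)
    17.684768341 17.684768355 174411.393 174411.396
  case hl | hu => simp only [Sz, Finset.sum_range_succ, Finset.sum_range_zero]; norm_num1
  case hg1 | hg2 =>
    simp only [Gp, Finset.sum_range_succ, Finset.sum_range_zero, Nat.factorial]; norm_num1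
  all_goals norm_num1

theorem anchor_733 : AOK 733 2308327146815170 2308327536316558 42190380 42203405 := by
  apply anchor_gen 733 2308327146815170 2308327536316558 42190380 42203405 (by norm_num) (by norm_num) (291 / 1024)
    17.687500584 17.687500598 174830.422 174830.425
  case hl | hu => simp only [Sz, Finset.sum_range_succ, Finset.sum_range_zero]; norm_num1
  case hg1 | hg2 =>
    simp only [Gp, Finset.sum_range_succ, Finset.sum_range_zero, Nat.factorial]; norm_num1
  all_goals norm_num1

theorem anchor_739 : AOK 739 2324914542587725 2324914934603398 42151627 42164528 := by
  apply anchor_gen 739 2324914542587725 2324914934603398 42151627 42164528 (by norm_num) (by norm_num) (285 / 1024)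
    17.695652803 17.695652817 176086.735 176086.738
  case hl | hu => simp only [Sz, Finset.sum_range_succ, Finset.sum_range_zero]; norm_num1
  case hg1 | hg2 =>
    simp only [Gp, Finset.sum_range_succ, Finset.sum_range_zero, Nat.factorial]; norm_num1
  all_goals norm_num1

theorem anchor_741 : AOK 741 2330440281280515 2330440674133769 42138790 42151652 := by
  apply anchor_gen 741 2330440281280515 2330440674133769 42138790 42151652 (by norm_num) (by norm_num) (283 / 1024)
    17.698355507 17.698355521 176505.249 176505.252
  case hl | hu => simp only [Sz, Finset.sum_range_succ, Finset.sum_range_zero]; norm_num1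
  case hg1 | hg2 =>
    simp only [Gp, Finset.sum_range_succ, Finset.sum_range_zero, Nat.factorial]; norm_num1
  all_goals norm_num1

theorem anchor_745 : AOK 745 2341486715030325 2341487122761212 42113239 42126019 := by
  apply anchor_gen 745 2341486715030325 2341487122761212 42113239 42126019 (by norm_num) (by norm_num) (279 / 1024)
    17.703739100 17.703739114 177341.895 177341.899
  case hl | hu => simp only [Sz, Finset.sum_range_succ, Finset.sum_range_zero]; norm_num1
  case hg1 | hg2 =>
    simp only [Gp, Finset.sum_range_succ, Finset.sum_range_zero, Nat.factorial]; norm_num1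
  all_goals norm_num1

theorem anchor_749 : AOK 749 2352526454739990 2352526864144259 42087847 42100548 := by
  apply anchor_gen 749 2352526454739990 2352526864144259 42087847 42100548 (by norm_num) (by norm_num) (275 / 1024)
    17.709093865 17.709093879 178178.034 178178.038
  case hl | hu => simp only [Sz, Finset.sum_range_succ, Finset.sum_range_zero]; norm_num1
  case hg1 | hg2 =>
    simp only [Gp, Finset.sum_range_succ, Finset.sum_range_zero, Nat.factorial]; norm_num1
  all_goals norm_num1

theorem anchor_751 : AOK 751 2358043822581790 2358044232822371 42075210 42087871 := by
  apply anchor_gen 751 2358043822581790 2358044232822371 42075210 42087871 (by norm_num) (by norm_num) (273 / 1024)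
    17.711760533 17.711760547 178595.914 178595.918
  case hl | hu => simp only [Sz, Finset.sum_range_succ, Finset.sum_range_zero]; norm_num1
  case hg1 | hg2 =>
    simp only [Gp, Finset.sum_range_succ, Finset.sum_range_zero, Nat.factorial]; norm_num1
  all_goals norm_num1

theorem Tw_15 : Tw 15 = 7 := by
  unfold Tw
  simp only [Nat.count_succ, tw, Nat.count_zero]
  norm_num

theorem Tw_1039 : Tw 1039 = 145 := by
  have h := chkSeg_sound 10 4 15 14 [(1024, 138)] (by decide +kernel) (by norm_num) (by norm_num)
    (by norm_num) (1024, 138) (by simp) (by norm_num)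
  rw [Tw_15] at h
  exact h

theorem Tw_1295 : Tw 1295 = 172 := by
  have h := chkSeg_sound 8 4 1039 14 [(256, 27)] (by decide +kernel) (by norm_num) (by norm_num)
    (by norm_num) (256, 27) (by simp) (by norm_num)
  rw [Tw_1039] at h
  exact h

theorem seg_step (a b t t' : ℕ) (pts : List (ℕ × ℕ)) (hT : Tw a = t)
    (h : chkSeg 18 11 a 1187 ((262144, t' - t) :: pts.map (fun p => (p.1 + 1 - a, p.2 - t))) = true)
    (hb : b = a + 262144) (ha : 1187 < a) (hb2 : b < 8400000) (ht : t ≤ t')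
    (hr : pts.all (fun p => Nat.ble a (p.1 + 1) && Nat.ble (p.1 + 1) b && Nat.ble t p.2) = true) :
    Tw b = t' ∧ ∀ p ∈ pts, Tw (p.1 + 1) = p.2 := by
  have hs := chkSeg_sound 18 11 a 1187 _ h (by norm_num) ha (by omega)
  rw [hT] at hs
  constructor
  · have := hs (262144, t' - t) List.mem_cons_self (by norm_num)
    simp only at this
    rw [hb, this]
    omega
  · intro p hp
    rw [List.all_eq_true] at hr
    have h1 := hr p hp
    simp only [Bool.and_eq_true, Nat.ble_eq] at h1
    have := hs (p.1 + 1 - a, p.2 - t)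
      (List.mem_cons_of_mem _ (List.mem_map.2 ⟨p, hp, rfl⟩)) (by simp only; omega)
    simp only at this
    have e : a + (p.1 + 1 - a) = p.1 + 1 := by omega
    rw [e] at this
    omega

theorem seg_0 : Tw 263439 = 12139 ∧ ∀ p ∈ ([] : List (ℕ × ℕ)), Tw (p.1 + 1) = p.2 :=
  seg_step 1295 263439 172 12139 [] Tw_1295 (by decide +kernel) rfl (by norm_num) (by norm_num)
    (by norm_num) (by decide +kernel)

theorem seg_1 : Tw 525583 = 21856 ∧ ∀ p ∈ ([] : List (ℕ × ℕ)), Tw (p.1 + 1) = p.2 :=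
  seg_step 263439 525583 12139 21856 [] seg_0.1 (by decide +kernel) rfl (by norm_num) (by norm_num)
    (by norm_num) (by decide +kernel)

theorem seg_2 : Tw 787727 = 30966 ∧ ∀ p ∈ ([] : List (ℕ × ℕ)), Tw (p.1 + 1) = p.2 :=
  seg_step 525583 787727 21856 30966 [] seg_1.1 (by decide +kernel) rfl (by norm_num) (by norm_num)
    (by norm_num) (by decide +kernel)

theorem seg_3 : Tw 1049871 = 39576 ∧ ∀ p ∈ ([] : List (ℕ × ℕ)), Tw (p.1 + 1) = p.2 :=
  seg_step 787727 1049871 30966 39576 [] seg_2.1 (by decide +kernel) rfl (by norm_num) (by norm_num)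
    (by norm_num) (by decide +kernel)

theorem seg_4 : Tw 1312015 = 47936 ∧ ∀ p ∈ ([] : List (ℕ × ℕ)), Tw (p.1 + 1) = p.2 :=
  seg_step 1049871 1312015 39576 47936 [] seg_3.1 (by decide +kernel) rfl (by norm_num) (by norm_num)
    (by norm_num) (by decide +kernel)

theorem seg_5 : Tw 1574159 = 56136 ∧ ∀ p ∈ ([] : List (ℕ × ℕ)), Tw (p.1 + 1) = p.2 :=
  seg_step 1312015 1574159 47936 56136 [] seg_4.1 (by decide +kernel) rfl (by norm_num) (by norm_num)
    (by norm_num) (by decide +kernel)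

theorem seg_6 : Tw 1836303 = 64118 ∧ ∀ p ∈ ([] : List (ℕ × ℕ)), Tw (p.1 + 1) = p.2 :=
  seg_step 1574159 1836303 56136 64118 [] seg_5.1 (by decide +kernel) rfl (by norm_num) (by norm_num)
    (by norm_num) (by decide +kernel)

theorem seg_7 : Tw 2098447 = 71909 ∧ ∀ p ∈ ([] : List (ℕ × ℕ)), Tw (p.1 + 1) = p.2 :=
  seg_step 1836303 2098447 64118 71909 [] seg_6.1 (by decide +kernel) rfl (by norm_num) (by norm_num)
    (by norm_num) (by decide +kernel)

theorem seg_8 : Tw 2360591 = 79593 ∧ ∀ p ∈ ([] : List (ℕ × ℕ)), Tw (p.1 + 1) = p.2 :=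
  seg_step 2098447 2360591 71909 79593 [] seg_7.1 (by decide +kernel) rfl (by norm_num) (by norm_num)
    (by norm_num) (by decide +kernel)

theorem seg_9 : Tw 2622735 = 87270 ∧ ∀ p ∈ ([] : List (ℕ × ℕ)), Tw (p.1 + 1) = p.2 :=
  seg_step 2360591 2622735 79593 87270 [] seg_8.1 (by decide +kernel) rfl (by norm_num) (by norm_num)
    (by norm_num) (by decide +kernel)

theorem seg_10 : Tw 2884879 = 94793 ∧ ∀ p ∈ ([] : List (ℕ × ℕ)), Tw (p.1 + 1) = p.2 :=
  seg_step 2622735 2884879 87270 94793 [] seg_9.1 (by decide +kernel) rfl (by norm_num) (by norm_num)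
    (by norm_num) (by decide +kernel)

theorem seg_11 : Tw 3147023 = 102255 ∧ ∀ p ∈ ([] : List (ℕ × ℕ)), Tw (p.1 + 1) = p.2 :=
  seg_step 2884879 3147023 94793 102255 [] seg_10.1 (by decide +kernel) rfl (by norm_num) (by norm_num)
    (by norm_num) (by decide +kernel)

theorem seg_12 : Tw 3409167 = 109560 ∧ ∀ p ∈ ([] : List (ℕ × ℕ)), Tw (p.1 + 1) = p.2 :=
  seg_step 3147023 3409167 102255 109560 [] seg_11.1 (by decide +kernel) rfl (by norm_num) (by norm_num)
    (by norm_num) (by decide +kernel)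

theorem seg_13 : Tw 3671311 = 116818 ∧ ∀ p ∈ ([] : List (ℕ × ℕ)), Tw (p.1 + 1) = p.2 :=
  seg_step 3409167 3671311 109560 116818 [] seg_12.1 (by decide +kernel) rfl (by norm_num) (by norm_num)
    (by norm_num) (by decide +kernel)

theorem seg_14 : Tw 3933455 = 124109 ∧ ∀ p ∈ ([] : List (ℕ × ℕ)), Tw (p.1 + 1) = p.2 :=
  seg_step 3671311 3933455 116818 124109 [] seg_13.1 (by decide +kernel) rfl (by norm_num) (by norm_num)
    (by norm_num) (by decide +kernel)

theorem seg_15 : Tw 4195599 = 131288 ∧ ∀ p ∈ ([] : List (ℕ × ℕ)), Tw (p.1 + 1) = p.2 :=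
  seg_step 3933455 4195599 124109 131288 [] seg_14.1 (by decide +kernel) rfl (by norm_num) (by norm_num)
    (by norm_num) (by decide +kernel)

theorem seg_16 : Tw 4457743 = 138403 ∧ ∀ p ∈ ([] : List (ℕ × ℕ)), Tw (p.1 + 1) = p.2 :=
  seg_step 4195599 4457743 131288 138403 [] seg_15.1 (by decide +kernel) rfl (by norm_num) (by norm_num)
    (by norm_num) (by decide +kernel)

theorem seg_17 : Tw 4719887 = 145339 ∧ ∀ p ∈ ([] : List (ℕ × ℕ)), Tw (p.1 + 1) = p.2 :=
  seg_step 4457743 4719887 138403 145339 [] seg_16.1 (by decide +kernel) rfl (by norm_num) (by norm_num)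
    (by norm_num) (by decide +kernel)

theorem seg_18 : Tw 4982031 = 152359 ∧ ∀ p ∈ ([] : List (ℕ × ℕ)), Tw (p.1 + 1) = p.2 :=
  seg_step 4719887 4982031 145339 152359 [] seg_17.1 (by decide +kernel) rfl (by norm_num) (by norm_num)
    (by norm_num) (by decide +kernel)

theorem seg_19 : Tw 5244175 = 159422 ∧ ∀ p ∈ ([] : List (ℕ × ℕ)), Tw (p.1 + 1) = p.2 :=
  seg_step 4982031 5244175 152359 159422 [] seg_18.1 (by decide +kernel) rfl (by norm_num) (by norm_num)
    (by norm_num) (by decide +kernel)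

theorem seg_20 : Tw 5506319 = 166299 ∧ ∀ p ∈ ([] : List (ℕ × ℕ)), Tw (p.1 + 1) = p.2 :=
  seg_step 5244175 5506319 159422 166299 [] seg_19.1 (by decide +kernel) rfl (by norm_num) (by norm_num)
    (by norm_num) (by decide +kernel)

theorem seg_21 : Tw 5768463 = 173247 ∧ ∀ p ∈ ([] : List (ℕ × ℕ)), Tw (p.1 + 1) = p.2 :=
  seg_step 5506319 5768463 166299 173247 [] seg_20.1 (by decide +kernel) rfl (by norm_num) (by norm_num)
    (by norm_num) (by decide +kernel)

def pts22 : List (ℕ × ℕ) := [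
  (5878360, 176047), (5879604, 176071), (5879688, 176075), (5879766, 176075), (5879790, 176078),
  (5880004, 176079), (5881370, 176124), (5897667, 176545), (5897853, 176555), (5904686, 176729),
  (5905078, 176747), (5907841, 176811), (5908105, 176823), (5908351, 176825), (5908493, 176833),
  (5910472, 176881), (5910488, 176883), (5911037, 176893), (5911493, 176910), (5911677, 176911),
  (5911867, 176920), (5912301, 176926), (5932675, 177464), (5932732, 177464), (5932957, 177474)]

theorem seg_22 : Tw 6030607 = 180072 ∧ ∀ p ∈ pts22, Tw (p.1 + 1) = p.2 :=
  seg_step 5768463 6030607 173247 180072 pts22 seg_21.1 (by decide +kernel) rfl (by norm_num) (by norm_num)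
    (by norm_num) (by decide +kernel)

theorem seg_23 : Tw 6292751 = 187014 ∧ ∀ p ∈ ([] : List (ℕ × ℕ)), Tw (p.1 + 1) = p.2 :=
  seg_step 6030607 6292751 180072 187014 [] seg_22.1 (by decide +kernel) rfl (by norm_num) (by norm_num)
    (by norm_num) (by decide +kernel)

theorem seg_24 : Tw 6554895 = 193780 ∧ ∀ p ∈ ([] : List (ℕ × ℕ)), Tw (p.1 + 1) = p.2 :=
  seg_step 6292751 6554895 187014 193780 [] seg_23.1 (by decide +kernel) rfl (by norm_num) (by norm_num)
    (by norm_num) (by decide +kernel)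

theorem seg_25 : Tw 6817039 = 200648 ∧ ∀ p ∈ ([] : List (ℕ × ℕ)), Tw (p.1 + 1) = p.2 :=
  seg_step 6554895 6817039 193780 200648 [] seg_24.1 (by decide +kernel) rfl (by norm_num) (by norm_num)
    (by norm_num) (by decide +kernel)

theorem seg_26 : Tw 7079183 = 207254 ∧ ∀ p ∈ ([] : List (ℕ × ℕ)), Tw (p.1 + 1) = p.2 :=
  seg_step 6817039 7079183 200648 207254 [] seg_25.1 (by decide +kernel) rfl (by norm_num) (by norm_num)
    (by norm_num) (by decide +kernel)

theorem seg_27 : Tw 7341327 = 213937 ∧ ∀ p ∈ ([] : List (ℕ × ℕ)), Tw (p.1 + 1) = p.2 :=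
  seg_step 7079183 7341327 207254 213937 [] seg_26.1 (by decide +kernel) rfl (by norm_num) (by norm_num)
    (by norm_num) (by decide +kernel)

def pts28 : List (ℕ × ℕ) := [
  (7537431, 218918), (7537432, 218919), (7537951, 218926), (7550715, 219258), (7550789, 219258),
  (7550868, 219263), (7551009, 219264), (7551038, 219266), (7551106, 219266), (7551155, 219269),
  (7551196, 219269), (7551197, 219270), (7551251, 219270), (7551500, 219282), (7553396, 219325),
  (7553397, 219326), (7553449, 219326), (7553612, 219334), (7553942, 219339), (7553980, 219342),
  (7554091, 219342), (7554410, 219358), (7556067, 219392), (7556153, 219396), (7556191, 219396),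
  (7556192, 219397), (7556401, 219399), (7556693, 219410), (7556844, 219411), (7556920, 219416),
  (7557026, 219417), (7557043, 219419), (7557517, 219428), (7558040, 219449), (7568227, 219702),
  (7568348, 219707), (7568819, 219712), (7569138, 219727), (7569176, 219727), (7569188, 219729),
  (7569356, 219731), (7569397, 219734), (7569551, 219735), (7569620, 219741), (7569759, 219741),
  (7569845, 219745), (7570084, 219747), (7570427, 219760), (7570517, 219760), (7570878, 219775),
  (7571272, 219780), (7571732, 219803), (7573142, 219828), (7573143, 219829), (7573492, 219832),
  (7575780, 219899), (7580866, 220025), (7580878, 220027), (7580946, 220027), (7580947, 220028),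
  (7581477, 220032), (7584327, 220115), (7584404, 220115), (7584857, 220134), (7587222, 220187),
  (7587223, 220188), (7587359, 220189), (7587492, 220196), (7587661, 220198), (7587662, 220199),
  (7587696, 220199), (7587898, 220209)]

theorem seg_28 : Tw 7603471 = 220630 ∧ ∀ p ∈ pts28, Tw (p.1 + 1) = p.2 :=
  seg_step 7341327 7603471 213937 220630 pts28 seg_27.1 (by decide +kernel) rfl (by norm_num) (by norm_num)
    (by norm_num) (by decide +kernel)

def pts29 : List (ℕ × ℕ) := [
  (7710334, 223316), (7712752, 223385), (7713017, 223388), (7713030, 223390), (7713061, 223390),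
  (7713482, 223409)]

theorem seg_29 : Tw 7865615 = 227289 ∧ ∀ p ∈ pts29, Tw (p.1 + 1) = p.2 :=
  seg_step 7603471 7865615 220630 227289 pts29 seg_28.1 (by decide +kernel) rfl (by norm_num) (by norm_num)
    (by norm_num) (by decide +kernel)

def pts30 : List (ℕ × ℕ) := [
  (7891857, 227930), (7892092, 227942), (7893022, 227958), (7893177, 227965), (7893217, 227965),
  (7893218, 227966), (7893577, 227970), (7896507, 228052), (7897087, 228059), (7897990, 228087),
  (7898101, 228088), (7898287, 228101), (7946649, 229317), (7946808, 229325), (7946887, 229325),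
  (7946922, 229328), (7946997, 229328), (7947012, 229330), (7947074, 229330), (7947118, 229333),
  (7947169, 229333), (7947312, 229340), (7947606, 229342), (7947672, 229349), (7947841, 229350),
  (7947842, 229351), (7948186, 229356), (7948307, 229364), (7948572, 229365), (7948845, 229378),
  (7949104, 229381), (7949200, 229387), (7949771, 229395), (7951310, 229442), (7951779, 229448),
  (7952082, 229460), (7952226, 229461), (7952247, 229463), (7952349, 229464), (7952418, 229469),
  (7952652, 229471), (7952975, 229486), (7953577, 229494), (7953642, 229500), (7954087, 229505),
  (7954697, 229532), (7957426, 229592), (7957472, 229595), (7957932, 229601), (7992960, 230496),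
  (7993267, 230501), (7993268, 230502), (7993306, 230502), (7993340, 230504), (7993386, 230504),
  (7993387, 230505), (7993442, 230505), (7993498, 230509), (7993647, 230510), (7994012, 230524),
  (7997541, 230609), (7997560, 230612), (7998127, 230618), (8003768, 230770), (8004079, 230774),
  (8004503, 230790), (8005491, 230810), (8005517, 230813), (8005777, 230814), (8005973, 230824),
  (8006049, 230824), (8006092, 230827), (8006154, 230827), (8006162, 230829), (8006221, 230829),
  (8006653, 230847), (8008366, 230882), (8008572, 230891), (8008772, 230892), (8008787, 230895),
  (8009217, 230899), (8016018, 231078), (8016054, 231078), (8016055, 231079), (8016521, 231085),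
  (8079673, 232689), (8080174, 232694), (8081600, 232739), (8081909, 232741), (8082335, 232761),
  (8082806, 232767), (8082807, 232768), (8082836, 232768), (8082893, 232771), (8082987, 232771),
  (8083058, 232775), (8083256, 232776), (8083652, 232792), (8084302, 232805), (8084648, 232819),
  (8092142, 233003), (8092228, 233009), (8092652, 233014), (8093342, 233038), (8093809, 233042),
  (8098923, 233176), (8098976, 233176), (8098995, 233178), (8099526, 233186)]

theorem seg_30 : Tw 8127759 = 233886 ∧ ∀ p ∈ pts30, Tw (p.1 + 1) = p.2 :=
  seg_step 7865615 8127759 227289 233886 pts30 seg_29.1 (by decide +kernel) rfl (by norm_num) (by norm_num)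
    (by norm_num) (by decide +kernel)

def pts31 : List (ℕ × ℕ) := [
  (8147065, 234397), (8148139, 234419), (8148140, 234420), (8148197, 234420), (8148238, 234423),
  (8148517, 234425), (8149025, 234447), (8150127, 234460), (8182892, 235298), (8182957, 235298),
  (8182960, 235300), (8183006, 235300), (8183035, 235303), (8183151, 235303), (8183348, 235314),
  (8183906, 235318), (8200668, 235747), (8200702, 235747), (8200937, 235757), (8201336, 235762),
  (8201380, 235765), (8201446, 235765), (8201805, 235782), (8202881, 235801), (8202975, 235807),
  (8203576, 235817), (8203675, 235823)]

theorem seg_31 : Tw 8389903 = 240457 ∧ ∀ p ∈ pts31, Tw (p.1 + 1) = p.2 :=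
  seg_step 8127759 8389903 233886 240457 pts31 seg_30.1 (by decide +kernel) rfl (by norm_num) (by norm_num)
    (by norm_num) (by decide +kernel)

def ptsAll : List (ℕ × ℕ) :=
  pts22 ++ (pts28 ++ (pts29 ++ (pts30 ++ (pts31))))

theorem ptsAll_Tw : ∀ p ∈ ptsAll, Tw (p.1 + 1) = p.2 := by
  intro p hp
  simp only [ptsAll, List.mem_append] at hp
  rcases hp with hp | hp | hp | hp | hp
  · exact seg_22.2 p hp
  · exact seg_28.2 p hp
  · exact seg_29.2 p hp
  · exact seg_30.2 p hp
  · exact seg_31.2 p hp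

def anchs : List (ℕ × ℕ × ℕ × ℕ × ℕ) := [
  (538, 1759887382056725, 1759887688426695, 43700289, 43718995),
  (540, 1765616490178220, 1765616797416597, 43681706, 43700331),
  (543, 1774205590642770, 1774205885979829, 43653983, 43672487),
  (690, 2188992163069380, 2188992547685444, 42479406, 42493385),
  (692, 2194560944308270, 2194561316565202, 42465501, 42479433),
  (694, 2200127903500730, 2200128276601490, 42451644, 42465529),
  (705, 2230713778320570, 2230714156057477, 42376252, 42389884),
  (722, 2277876922031720, 2277877306917523, 42262397, 42275655),
  (727, 2291724382477075, 2291724782665086, 42229504, 42242655),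
  (731, 2302794608456355, 2302794997119132, 42203380, 42216446),
  (733, 2308327146815170, 2308327536316558, 42190380, 42203405),
  (739, 2324914542587725, 2324914934603398, 42151627, 42164528),
  (741, 2330440281280515, 2330440674133769, 42138790, 42151652),
  (745, 2341486715030325, 2341487122761212, 42113239, 42126019),
  (749, 2352526454739990, 2352526864144259, 42087847, 42100548),
  (751, 2358043822581790, 2358044232822371, 42075210, 42087871)]

theorem anchs_ok : ∀ c ∈ anchs, AOK c.1 c.2.1 c.2.2.1 c.2.2.2.1 c.2.2.2.2 := by
  intro c hc
  simp only [anchs, List.mem_cons, List.not_mem_nil, or_false] at hc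
  rcases hc with rfl | rfl | rfl | rfl | rfl | rfl | rfl | rfl | rfl | rfl | rfl | rfl | rfl | rfl | rfl | rfl
  · exact anchor_538
  · exact anchor_540
  · exact anchor_543
  · exact anchor_690
  · exact anchor_692
  · exact anchor_694
  · exact anchor_705
  · exact anchor_722
  · exact anchor_727
  · exact anchor_731
  · exact anchor_733
  · exact anchor_739
  · exact anchor_741
  · exact anchor_745
  · exact anchor_749
  · exact anchor_751

/-- Certificate that `d₂ (6 k + 1) > 0`, where `p = (k, T)`. -/
def posB (p : ℕ × ℕ) : Bool :=
  anchs.any (fun c => Nat.ble (65536 * c.1) (6 * p.1 + 1) &&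
    Nat.ble (6 * p.1 + 1) (65536 * c.1 + 131072) &&
    Nat.blt (c.2.2.1 + c.2.2.2.2 * (6 * p.1 + 1 - 65536 * c.1)) ((1 + p.2) * 10 ^ 10))

/-- Certificate that `d₂ (6 k + 1) < 0`, where `p = (k, T)`. -/
def negB (p : ℕ × ℕ) : Bool :=
  anchs.any (fun c => Nat.ble (65536 * c.1) (6 * p.1 + 1) &&
    Nat.ble (6 * p.1 + 1) (65536 * c.1 + 131072) &&
    Nat.blt ((1 + p.2) * 10 ^ 10) (c.2.1 + c.2.2.2.1 * (6 * p.1 + 1 - 65536 * c.1)))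

theorem d2_at (p : ℕ × ℕ) (hp : p ∈ ptsAll) (hk : 1 ≤ p.1) :
    d2 ((6 * p.1 + 1 : ℕ) : ℝ) = ((1 + p.2 : ℕ) : ℝ) - C2 * Li2 ((6 * p.1 + 1 : ℕ) : ℝ) := by
  unfold d2
  rw [piTwin_eq p.1 hk, ptsAll_Tw p hp]

theorem posB_sound (p : ℕ × ℕ) (hp : p ∈ ptsAll) (hk : 1 ≤ p.1) (h : posB p = true) :
    0 < d2 ((6 * p.1 + 1 : ℕ) : ℝ) := by
  rw [d2_at p hp hk]
  unfold posB at h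
  rw [List.any_eq_true] at h
  obtain ⟨c, hc, h⟩ := h
  simp only [Bool.and_eq_true, Nat.ble_eq, Nat.blt_eq] at h
  obtain ⟨⟨h1, h2⟩, h3⟩ := h
  have h4 := (anchs_ok c hc _ h1 h2).2
  have h5 := (Nat.cast_lt (α := ℝ)).2 h3
  rw [Nat.cast_mul (1 + p.2), Nat.cast_pow] at h5
  have h6 := lt_of_le_of_lt h4 h5
  have e : ((10 : ℕ) : ℝ) = 10 := by norm_num
  rw [e] at h6
  linarith

theorem negB_sound (p : ℕ × ℕ) (hp : p ∈ ptsAll) (hk : 1 ≤ p.1) (h : negB p = true) :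
    d2 ((6 * p.1 + 1 : ℕ) : ℝ) < 0 := by
  rw [d2_at p hp hk]
  unfold negB at h
  rw [List.any_eq_true] at h
  obtain ⟨c, hc, h⟩ := h
  simp only [Bool.and_eq_true, Nat.ble_eq, Nat.blt_eq] at h
  obtain ⟨⟨h1, h2⟩, h3⟩ := h
  have h4 := (anchs_ok c hc _ h1 h2).1
  have h5 := (Nat.cast_lt (α := ℝ)).2 h3
  rw [Nat.cast_mul (1 + p.2), Nat.cast_pow] at h5
  have h6 := lt_of_lt_of_le h5 h4
  have e : ((10 : ℕ) : ℝ) = 10 := by norm_num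
  rw [e] at h6
  linarith

def ptAt (i : ℕ) : ℕ × ℕ := ptsAll.getD i (0, 0)

def chkOne (i : ℕ) : Bool :=
  Nat.ble 1 (ptAt i).1 && Nat.ble (ptAt i).1 11000000 &&
    (bif Nat.beq (i % 2) 0 then posB (ptAt i) else negB (ptAt i))

theorem chk_all : (List.range 239).all chkOne = true := by decide +kernel

theorem chk_mono : (List.range 238).all (fun i => Nat.blt (ptAt i).1 (ptAt (i + 1)).1) = true := by
  decide +kernel

theorem ptsAll_length : ptsAll.length = 239 := by decide +kernel

theorem ptAt_mem (i : ℕ) (hi : i < 239) : ptAt i ∈ ptsAll := by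
  have h : i < ptsAll.length := by rw [ptsAll_length]; exact hi
  unfold ptAt
  rw [List.getD_eq_getElem _ _ h]
  exact List.getElem_mem h

theorem pt_facts (i : ℕ) (hi : i < 239) : 1 ≤ (ptAt i).1 ∧ (ptAt i).1 ≤ 11000000 ∧
    (i % 2 = 0 → 0 < d2 ((6 * (ptAt i).1 + 1 : ℕ) : ℝ)) ∧
    (i % 2 = 1 → d2 ((6 * (ptAt i).1 + 1 : ℕ) : ℝ) < 0) := by
  have h := List.all_eq_true.1 chk_all i (List.mem_range.2 hi)
  unfold chkOne at h
  rw [Bool.and_eq_true, Bool.and_eq_true, Nat.ble_eq, Nat.ble_eq] at h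
  obtain ⟨⟨h1, h2⟩, h3⟩ := h
  refine ⟨h1, h2, ?_, ?_⟩
  · intro h0
    rw [h0] at h3
    exact posB_sound _ (ptAt_mem i hi) h1 h3
  · intro h0
    rw [h0] at h3
    exact negB_sound _ (ptAt_mem i hi) h1 h3

/-- `d₂` has at least 238 sign changes on the interval `(2, 2^26)`. -/
theorem d2_sign_changes_238 :
    ∃ x : ℕ → ℝ,
      (∀ i ≤ 238, 2 < x i ∧ x i < 2 ^ 26) ∧
      (∀ i < 238, x i < x (i + 1)) ∧
      (∀ i < 238, d2 (x i) * d2 (x (i + 1)) < 0) := by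
  refine ⟨fun i => ((6 * (ptAt i).1 + 1 : ℕ) : ℝ), ?_, ?_, ?_⟩
  · intro i hi
    obtain ⟨h1, h2, -⟩ := pt_facts i (by omega)
    have a1 : 2 < 6 * (ptAt i).1 + 1 := by omega
    have a2 : 6 * (ptAt i).1 + 1 < 2 ^ 26 := by omega
    beta_reduce
    exact ⟨by exact_mod_cast a1, by exact_mod_cast a2⟩
  · intro i hi
    have h := List.all_eq_true.1 chk_mono i (List.mem_range.2 hi)
    simp only [Nat.blt_eq] at h
    have a1 : 6 * (ptAt i).1 + 1 < 6 * (ptAt (i + 1)).1 + 1 := by omega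
    beta_reduce
    exact_mod_cast a1
  · intro i hi
    obtain ⟨-, -, h1, h2⟩ := pt_facts i (by omega)
    obtain ⟨-, -, h3, h4⟩ := pt_facts (i + 1) (by omega)
    rcases Nat.mod_two_eq_zero_or_one i with h | h
    · exact mul_neg_of_pos_of_neg (h1 h) (h4 (by omega))
    · exact mul_neg_of_neg_of_pos (h2 h) (h3 (by omega))
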